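/- arXiv:1707.05077 — 5 statements merged into one kernel-verified Lean document; each statement's English description precedes it below -/
import Mathlib

section
/- Let k and f be natural numbers with 0 < 2(f+1) - k ≤ k, and let λ ≥ 1 be a real number. Suppose g_1, …, g_k : ℝ_{≥0} → ℝ are 1-Lipschitz functions with g_r(0) = 0 for every r (trajectories of k robots starting at the origin, moving at speed at most 1). If for every real x with |x| ≥ 1 there are at least f+1 indices r such that g_r(t) = x for some t ∈ [0, λ|x|], then λ ≥ 2·ρ^ρ/(ρ-1)^{ρ-1} + 1, where ρ := 2(f+1)/k. -/
open scoped NNReal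

/-- weighted AM-GM in the form needed. -/
lemma amgm_aux (s k : ℕ) (hs : 0 < s) (hk : 0 < k) (a b : ℝ) (ha : 0 ≤ a) (hb : 0 ≤ b) :
    ((s + k : ℝ) ^ (s + k) / ((s : ℝ) ^ s * (k : ℝ) ^ k)) * (a ^ s * b ^ k) ≤ (a + b) ^ (s + k) := by
  have hs' : (0 : ℝ) < s := by exact_mod_cast hs
  have hk' : (0 : ℝ) < k := by exact_mod_cast hk
  have hsk' : (0 : ℝ) < s + k := by positivity
  have h := Real.geom_mean_le_arith_mean2_weighted (w₁ := s / (s + k)) (w₂ := k / (s + k))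
    (p₁ := a / s) (p₂ := b / k) (by positivity) (by positivity) (by positivity) (by positivity)
    (by field_simp)
  have e1 : (s : ℝ) / (s + k) * (a / s) + k / (s + k) * (b / k) = (a + b) / (s + k) := by
    field_simp
  rw [e1] at h
  have h2 := pow_le_pow_left₀ (by positivity) h (s + k)
  have e2 : ((a / s) ^ ((s : ℝ) / (s + k)) * (b / k) ^ ((k : ℝ) / (s + k))) ^ (s + k)
      = (a / s) ^ s * (b / k) ^ k := by
    rw [mul_pow, ← Real.rpow_natCast, ← Real.rpow_natCast, ← Real.rpow_mul (by positivity),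
      ← Real.rpow_mul (by positivity)]
    push_cast
    rw [div_mul_cancel₀ _ hsk'.ne', div_mul_cancel₀ _ hsk'.ne', Real.rpow_natCast,
      Real.rpow_natCast]
  rw [e2, div_pow, div_pow, div_pow, le_div_iff₀ (by positivity)] at h2
  calc _ = a ^ s / (s : ℝ) ^ s * (b ^ k / (k : ℝ) ^ k) * (s + k : ℝ) ^ (s + k) := by
        field_simp
    _ ≤ _ := h2

/-- The greedy potential argument. -/
lemma core_aux (k s : ℕ) (hs : 0 < s) (hsk : s ≤ k) (J : Fin k → ℝ → ℝ → Prop)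
    (C : Fin k → ℝ → Prop) (m c ε : ℝ) (hc : 1 < c) (hε : 0 < ε)
    (hεm : ε ≤ m)
    (hC : ∀ x : ℝ, 1 ≤ x → s ≤ {r : Fin k | C r x}.ncard)
    (hJ0 : ∀ r, J r ε 1)
    (hstep : ∀ r L e x, J r L e → 1 ≤ x → e < x → C r x →
      ∃ L' t, x ≤ t ∧ L + t ≤ L' ∧ c * L' ≤ m * x ∧ J r L' t) :
    (s + k : ℝ) ^ (s + k) / ((s : ℝ) ^ s * (k : ℝ) ^ k) ≤ m ^ k := by
  classical
  have hk : 0 < k := lt_of_lt_of_le hs hsk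
  have hm : 0 < m := lt_of_lt_of_le hε hεm
  set K : ℝ := (s + k : ℝ) ^ (s + k) / ((s : ℝ) ^ s * (k : ℝ) ^ k) with hK
  have hKpos : 0 < K := by
    have hs' : (0 : ℝ) < s := by exact_mod_cast hs
    have hk' : (0 : ℝ) < k := by exact_mod_cast hk
    positivity
  set δ : ℝ := K / m ^ k with hδ
  have hδpos : 0 < δ := by positivity
  have key : ∀ n : ℕ, ∃ (L e : Fin k → ℝ) (A : Finset (Fin k)),
      A.card = s ∧ (∀ r, J r (L r) (e r)) ∧ (∀ r, 0 < L r) ∧ (∀ r, 1 ≤ e r) ∧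
      (∀ r, ∀ j ∈ A, L r ≤ m * e j) ∧ (∀ r, r ∉ A → ∀ j ∈ A, e r ≤ e j) ∧
      δ ^ n * (ε ^ s) ^ k * (∏ j ∈ A, e j ^ k) ≤ ∏ r, L r ^ s := by
    intro n
    induction n with
    | zero =>
      obtain ⟨A, -, hA⟩ := Finset.exists_subset_card_eq (s := (Finset.univ : Finset (Fin k)))
        (n := s) (by simpa using hsk)
      refine ⟨fun _ => ε, fun _ => 1, A, hA, hJ0, fun _ => hε, fun _ => le_rfl, ?_, ?_, ?_⟩
      · intro r j _; simpa using hεm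
      · intros; exact le_rfl
      · simp
    | succ n ih =>
      obtain ⟨L, e, A, hA, hJ, hL, he, hLe, hout, hpot⟩ := ih
      have hAne : A.Nonempty := by rw [← Finset.card_pos, hA]; exact hs
      obtain ⟨q, hqA, hq⟩ := Finset.exists_min_image A e hAne
      have hx1 : 1 ≤ c * e q := by nlinarith [he q]
      have hqx : e q < c * e q := by nlinarith [he q]
      have hex : ∃ r, C r (c * e q) ∧ e r < c * e q := by
        by_contra hno
        push Not at hno
        have h1 : {r : Fin k | C r (c * e q)} ⊆ ((A.erase q : Finset (Fin k)) : Set (Fin k)) := by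
          intro r hr
          have h2 := hno r hr
          rw [Finset.mem_coe, Finset.mem_erase]
          constructor
          · rintro rfl; linarith
          · by_contra hrA
            have := hout r hrA q hqA
            linarith
        have h2 := Set.ncard_le_ncard h1 (Finset.finite_toSet _)
        rw [Set.ncard_coe_finset, Finset.card_erase_of_mem hqA, hA] at h2
        have := hC _ hx1
        omega
      obtain ⟨r, hrC, hrx⟩ := hex
      obtain ⟨L', t, hxt, hLt, hL'm, hJ'⟩ := hstep r (L r) (e r) _ (hJ r) hx1 hrx hrC
      have hL'q : L' ≤ m * e q := by
        have : c * L' ≤ c * (m * e q) := by linarith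
        exact le_of_mul_le_mul_left this (by linarith)
      have het : e r ≤ t := by linarith
      have ht : 0 < t := by linarith
      have hLL' : L r < L' := by linarith
      have hP : (∏ i, (Function.update L r L') i ^ s) * L r ^ s = (∏ i, L i ^ s) * L' ^ s := by
        rw [← Finset.mul_prod_erase Finset.univ (fun i => (Function.update L r L') i ^ s)
          (Finset.mem_univ r), ← Finset.mul_prod_erase Finset.univ (fun i => L i ^ s)
          (Finset.mem_univ r)]
        have : ∏ i ∈ Finset.univ.erase r, (Function.update L r L') i ^ s
            = ∏ i ∈ Finset.univ.erase r, L i ^ s := by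
          apply Finset.prod_congr rfl
          intro i hi
          rw [Function.update_of_ne (Finset.ne_of_mem_erase hi)]
        rw [this]
        simp
        ring
      -- generic conclusion
      have hpotstep : ∀ (A' : Finset (Fin k)) (o : Fin k), e q ≤ e o →
          (∏ j ∈ A', (Function.update e r t) j ^ k) * e o ^ k = (∏ j ∈ A, e j ^ k) * t ^ k →
          δ ^ (n+1) * (ε ^ s) ^ k * (∏ j ∈ A', (Function.update e r t) j ^ k)
            ≤ ∏ i, (Function.update L r L') i ^ s := by
        intro A' o ho hQ
        have heo : 0 < e o := by linarith [he o]
        have hLr := hL r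
        have hstep1 : δ * (t ^ k * L r ^ s) ≤ L' ^ s * e o ^ k := by
          have h1 : K * (L r ^ s * (L' - L r) ^ k) ≤ (L r + (L' - L r)) ^ (s + k) :=
            amgm_aux s k hs hk _ _ hLr.le (by linarith)
          have h2 : t ^ k ≤ (L' - L r) ^ k := pow_le_pow_left₀ ht.le (by linarith) k
          have h3 : L' ^ k ≤ (m * e o) ^ k := by
            apply pow_le_pow_left₀ (by linarith)
            exact hL'q.trans (mul_le_mul_of_nonneg_left ho hm.le)
          have h4 : K * (t ^ k * L r ^ s) ≤ L' ^ s * (m ^ k * e o ^ k) := by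
            calc K * (t ^ k * L r ^ s) ≤ K * ((L' - L r) ^ k * L r ^ s) := by gcongr
              _ = K * (L r ^ s * (L' - L r) ^ k) := by ring
              _ ≤ (L r + (L' - L r)) ^ (s + k) := h1
              _ = L' ^ s * L' ^ k := by rw [← pow_add]; congr 1; ring
              _ ≤ L' ^ s * (m * e o) ^ k := by
                  apply mul_le_mul_of_nonneg_left h3
                  apply pow_nonneg; linarith
              _ = _ := by rw [mul_pow]
          rw [hδ, div_mul_eq_mul_div, div_le_iff₀ (by positivity)]
          linarith
        have hpos : 0 < L r ^ s * e o ^ k := by positivity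
        apply le_of_mul_le_mul_right _ hpos
        have hPnn : 0 ≤ ∏ i, L i ^ s := Finset.prod_nonneg (fun i _ => (pow_pos (hL i) s).le)
        calc δ ^ (n+1) * (ε ^ s) ^ k * (∏ j ∈ A', (Function.update e r t) j ^ k) *
              (L r ^ s * e o ^ k)
            = δ ^ (n+1) * (ε ^ s) ^ k * L r ^ s *
              ((∏ j ∈ A', (Function.update e r t) j ^ k) * e o ^ k) := by ring
          _ = (δ ^ n * (ε ^ s) ^ k * (∏ j ∈ A, e j ^ k)) * (δ * (t ^ k * L r ^ s)) := by
              rw [hQ]; ring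
          _ ≤ (∏ i, L i ^ s) * (δ * (t ^ k * L r ^ s)) := by
              apply mul_le_mul_of_nonneg_right hpot (by positivity)
          _ ≤ (∏ i, L i ^ s) * (L' ^ s * e o ^ k) := mul_le_mul_of_nonneg_left hstep1 hPnn
          _ = ((∏ i, L i ^ s) * L' ^ s) * e o ^ k := by ring
          _ = _ := by rw [← hP]; ring
      -- common invariants
      have hJn : ∀ i, J i (Function.update L r L' i) (Function.update e r t i) := by
        intro i
        by_cases hi : i = r
        · subst hi; simpa using hJ'
        · simpa [Function.update_of_ne hi] using hJ i
      have hLn : ∀ i, 0 < Function.update L r L' i := by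
        intro i
        by_cases hi : i = r
        · subst hi; simp; linarith [hL i]
        · simpa [Function.update_of_ne hi] using hL i
      have hen : ∀ i, 1 ≤ Function.update e r t i := by
        intro i
        by_cases hi : i = r
        · subst hi; simp; linarith
        · simpa [Function.update_of_ne hi] using he i
      have hLq : ∀ i, Function.update L r L' i ≤ m * e q := by
        intro i
        by_cases hi : i = r
        · subst hi; simpa using hL'q
        · simpa [Function.update_of_ne hi] using hLe i q hqA
      by_cases hrA : r ∈ A
      · refine ⟨Function.update L r L', Function.update e r t, A, hA, hJn, hLn, hen, ?_, ?_, ?_⟩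
        · intro i j hj
          refine (hLq i).trans (mul_le_mul_of_nonneg_left ?_ hm.le)
          by_cases hi : j = r
          · subst hi; simp; linarith [hq j hj]
          · simpa [Function.update_of_ne hi] using hq j hj
        · intro i hi j hj
          have hir : i ≠ r := fun h => hi (h ▸ hrA)
          rw [Function.update_of_ne hir]
          have := hout i hi j hj
          by_cases hjr : j = r
          · subst hjr; simp; linarith
          · simpa [Function.update_of_ne hjr] using this
        · apply hpotstep A r (hq r hrA)
          rw [← Finset.mul_prod_erase A (fun i => (Function.update e r t) i ^ k) hrA,
            ← Finset.mul_prod_erase A (fun i => e i ^ k) hrA]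
          have : ∏ i ∈ A.erase r, (Function.update e r t) i ^ k
              = ∏ i ∈ A.erase r, e i ^ k := by
            apply Finset.prod_congr rfl
            intro i hi
            rw [Function.update_of_ne (Finset.ne_of_mem_erase hi)]
          rw [this]
          simp
          ring
      · have hrq : r ≠ q := fun h => hrA (h ▸ hqA)
        have hrE : r ∉ A.erase q := fun h => hrA (Finset.mem_of_mem_erase h)
        have hqn : ∀ j ∈ insert r (A.erase q), e q ≤ Function.update e r t j := by
          intro j hj
          by_cases hjr : j = r
          · subst hjr; simp; linarith
          · rw [Function.update_of_ne hjr]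
            rcases Finset.mem_insert.1 hj with h | h
            · exact absurd h hjr
            · exact hq j (Finset.mem_of_mem_erase h)
        refine ⟨Function.update L r L', Function.update e r t, insert r (A.erase q), ?_,
          hJn, hLn, hen, ?_, ?_, ?_⟩
        · rw [Finset.card_insert_of_notMem hrE, Finset.card_erase_of_mem hqA, hA]; omega
        · intro i j hj
          exact (hLq i).trans (mul_le_mul_of_nonneg_left (hqn j hj) hm.le)
        · intro i hi j hj
          have hir : i ≠ r := fun h => hi (h ▸ Finset.mem_insert_self _ _)
          rw [Function.update_of_ne hir]
          refine le_trans ?_ (hqn j hj)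
          by_cases hiq : i = q
          · rw [hiq]
          · apply hout i _ q hqA
            intro hiA
            exact hi (Finset.mem_insert_of_mem (Finset.mem_erase.2 ⟨hiq, hiA⟩))
        · apply hpotstep _ q le_rfl
          rw [Finset.prod_insert hrE, ← Finset.mul_prod_erase A (fun i => e i ^ k) hqA]
          have : ∏ i ∈ A.erase q, (Function.update e r t) i ^ k
              = ∏ i ∈ A.erase q, e i ^ k := by
            apply Finset.prod_congr rfl
            intro i hi
            have : i ≠ r := fun h => hrE (h ▸ hi)
            rw [Function.update_of_ne this]
          rw [this]
          simp
          ring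
  by_contra hcon
  push Not at hcon
  have hδ1 : 1 < δ := by rw [hδ, lt_div_iff₀ (by positivity)]; linarith
  have hbound : ∀ n : ℕ, δ ^ n * (ε ^ s) ^ k ≤ (m ^ s) ^ k := by
    intro n
    obtain ⟨L, e, A, hA, hJ, hL, he, hLe, hout, hpot⟩ := key n
    have hQ : 0 < ∏ j ∈ A, e j ^ k :=
      Finset.prod_pos (fun j _ => pow_pos (by linarith [he j]) k)
    apply le_of_mul_le_mul_right _ hQ
    refine hpot.trans ?_
    calc ∏ r, L r ^ s ≤ ∏ r : Fin k, ∏ j ∈ A, (m * e j) := by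
          apply Finset.prod_le_prod
          · intro i _; exact (pow_pos (hL i) s).le
          · intro i _
            rw [← hA, ← Finset.prod_const]
            apply Finset.prod_le_prod
            · intro _ _; exact (hL i).le
            · intro j hj; exact hLe i j hj
      _ = _ := by
          rw [Finset.prod_const, Finset.prod_mul_distrib, Finset.prod_const, hA, mul_pow,
            Finset.prod_pow]
          simp
  obtain ⟨n, hn⟩ := pow_unbounded_of_one_lt ((m ^ s) ^ k / (ε ^ s) ^ k) hδ1
  rw [div_lt_iff₀ (by positivity)] at hn
  linarith [hbound n]

/-- `h` reaches `y` first at time `τ`, and until then its minimum is `-t ≤ -y`. -/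
def FirstBothAux (h : ℝ≥0 → ℝ) (y : ℝ) (τ : ℝ≥0) (t : ℝ) : Prop :=
  h τ = y ∧ (∀ u < τ, h u < y) ∧ (∀ u ≤ τ, -t ≤ h u) ∧ (∃ u ≤ τ, h u = -t) ∧ y ≤ t

lemma lip_aux {h : ℝ≥0 → ℝ} (hl : LipschitzWith 1 h) {u v : ℝ≥0} (huv : u ≤ v) :
    |h v - h u| ≤ (v : ℝ) - u := by
  have := hl.dist_le_mul v u
  rw [Real.dist_eq, NNReal.dist_eq] at this
  have h2 : (u : ℝ) ≤ v := by exact_mod_cast huv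
  rw [abs_of_nonneg (by linarith : (0 : ℝ) ≤ (v : ℝ) - u)] at this
  simpa using this

lemma firstBoth_initial {h : ℝ≥0 → ℝ} (hl : LipschitzWith 1 h) (h0 : h 0 = 0) {y t : ℝ} {τ : ℝ≥0}
    (H : FirstBothAux h y τ t) : t ≤ ((τ : ℝ) - y) / 2 := by
  obtain ⟨h1, -, -, ⟨u, hu, hut⟩, -⟩ := H
  have a := abs_le.1 (lip_aux hl hu)
  have b := abs_le.1 (lip_aux hl (zero_le : 0 ≤ u))
  rw [h0, hut] at b
  rw [h1, hut] at a
  simp at b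
  linarith [a.2, b.1]

lemma firstBoth_same {h : ℝ≥0 → ℝ} (hl : LipschitzWith 1 h) {x y t t' : ℝ}
    {τ τ' : ℝ≥0} (hx : 0 < x) (H : FirstBothAux h x τ t) (H' : FirstBothAux h y τ' t')
    (hy : t < y) : ((τ : ℝ) - x) / 2 + t' ≤ ((τ' : ℝ) - y) / 2 := by
  obtain ⟨h1, h2, h3, -, h5⟩ := H
  obtain ⟨k1, k2, k3, ⟨u, hu, hut⟩, k5⟩ := H'
  have huτ : τ ≤ u := by
    by_contra hc
    push Not at hc
    have := h3 u hc.le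
    linarith
  have a := abs_le.1 (lip_aux hl hu)
  have b := abs_le.1 (lip_aux hl huτ)
  rw [k1, hut] at a
  rw [h1, hut] at b
  linarith [a.2, b.1]

lemma firstBoth_opp {h : ℝ≥0 → ℝ} (hl : LipschitzWith 1 h) {x y t t' : ℝ}
    {τ τ' : ℝ≥0} (H : FirstBothAux h x τ t) (H' : FirstBothAux (-h) y τ' t')
    (hy : t < y) : ((τ : ℝ) - x) / 2 + t' ≤ ((τ' : ℝ) - y) / 2 := by
  obtain ⟨h1, h2, h3, -, h5⟩ := H
  obtain ⟨k1, k2, k3, ⟨u, hu, hut⟩, k5⟩ := H'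
  simp only [Pi.neg_apply] at k1 hut
  have huτ : τ ≤ u := by
    by_contra hc
    push Not at hc
    have := h2 u hc
    linarith
  have a := abs_le.1 (lip_aux hl hu)
  have b := abs_le.1 (lip_aux hl huτ)
  linarith [a.1, b.2]

lemma firstTime_exists {h : ℝ≥0 → ℝ} (hc : Continuous h) {y : ℝ} {T : ℝ≥0} (hT : h T = y) :
    ∃ a ≤ T, h a = y ∧ ∀ u < a, h u ≠ y := by
  have hne : {u : ℝ≥0 | h u = y}.Nonempty := ⟨T, hT⟩
  have hcl : IsClosed {u : ℝ≥0 | h u = y} := isClosed_eq hc continuous_const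
  have hbd : BddBelow {u : ℝ≥0 | h u = y} := OrderBot.bddBelow _
  refine ⟨sInf {u : ℝ≥0 | h u = y}, csInf_le hbd hT, hcl.csInf_mem hne hbd, ?_⟩
  intro u hu hy
  exact absurd (csInf_le hbd hy) (not_le.2 hu)

lemma firstBoth_exists_aux {h : ℝ≥0 → ℝ} (hc : Continuous h) (h0 : h 0 = 0) {y : ℝ} (hy : 0 < y)
    {a b : ℝ≥0} (ha : h a = y) (ha' : ∀ u < a, h u ≠ y) (hb : h b = -y) (hba : b ≤ a) :
    ∃ t, FirstBothAux h y a t := by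
  obtain ⟨u, hu, hmin⟩ := (isCompact_Icc (a := (0 : ℝ≥0)) (b := a)).exists_isMinOn
    ⟨0, by simp⟩ hc.continuousOn
  refine ⟨-h u, ha, ?_, ?_, ⟨u, hu.2, by simp⟩, ?_⟩
  · intro v hv
    by_contra hvy
    push Not at hvy
    obtain ⟨w, hw, hwy⟩ := intermediate_value_Icc (zero_le : 0 ≤ v) hc.continuousOn
      (show y ∈ Set.Icc (h 0) (h v) from ⟨by rw [h0]; exact hy.le, hvy⟩)
    exact ha' w (lt_of_le_of_lt hw.2 hv) hwy
  · intro v hv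
    have := hmin (show v ∈ Set.Icc 0 a from ⟨zero_le, hv⟩)
    simpa using this
  · have : h u ≤ h b := hmin (show b ∈ Set.Icc 0 a from ⟨zero_le, hba⟩)
    linarith

lemma firstBoth_exists {h : ℝ≥0 → ℝ} (hc : Continuous h) (h0 : h 0 = 0) {y B : ℝ} (hy : 0 < y)
    (h1 : ∃ T : ℝ≥0, (T : ℝ) ≤ B ∧ h T = y) (h2 : ∃ T : ℝ≥0, (T : ℝ) ≤ B ∧ h T = -y) :
    ∃ (τ : ℝ≥0) (t : ℝ), (τ : ℝ) ≤ B ∧ (FirstBothAux h y τ t ∨ FirstBothAux (-h) y τ t) := by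
  obtain ⟨T1, hT1, e1⟩ := h1
  obtain ⟨T2, hT2, e2⟩ := h2
  obtain ⟨a, haT, ha, ha'⟩ := firstTime_exists hc e1
  obtain ⟨b, hbT, hb, hb'⟩ := firstTime_exists hc e2
  have haB : (a : ℝ) ≤ B := le_trans (by exact_mod_cast haT) hT1
  have hbB : (b : ℝ) ≤ B := le_trans (by exact_mod_cast hbT) hT2
  rcases le_total b a with hba | hab
  · obtain ⟨t, ht⟩ := firstBoth_exists_aux hc h0 hy ha ha' hb hba
    exact ⟨a, t, haB, Or.inl ht⟩
  · obtain ⟨t, ht⟩ := firstBoth_exists_aux (h := -h) hc.neg (by simp [h0]) hy (a := b) (b := a)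
      (by simp [hb]) (fun u hu hh => hb' u hu (by simp only [Pi.neg_apply] at hh; linarith))
      (by simp [ha]) hab
    exact ⟨b, t, hbB, Or.inr ht⟩

/-- Every doubly visited later point costs at least the turning distance. -/
lemma firstBoth_trans {h : ℝ≥0 → ℝ} (hl : LipschitzWith 1 h) {x y t t' : ℝ}
    {τ τ' : ℝ≥0} (hx : 0 < x) (H : FirstBothAux h x τ t ∨ FirstBothAux (-h) x τ t)
    (H' : FirstBothAux h y τ' t' ∨ FirstBothAux (-h) y τ' t')
    (hy : t < y) : ((τ : ℝ) - x) / 2 + t' ≤ ((τ' : ℝ) - y) / 2 := by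
  have hl' : LipschitzWith 1 (-h) := hl.neg
  rcases H with H | H <;> rcases H' with H' | H'
  · exact firstBoth_same hl hx H H' hy
  · exact firstBoth_opp hl H H' hy
  · exact firstBoth_opp hl' H (by simpa using H') hy
  · have hfinal := firstBoth_same hl' hx H H' hy
    exact hfinal

/-- Lower bound for parallel search on the line with `k` robots, `f` of which are
faulty of crash type.  Robots are 1-Lipschitz trajectories starting at 0; every
point `x` with `|x| ≥ 1` must be visited by at least `f+1` robots within time
`λ|x|`.  Then `λ ≥ 2 ρ^ρ/(ρ-1)^(ρ-1) + 1` where `ρ = 2(f+1)/k`. -/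
theorem line_search_crash_lower_bound
    (k f : ℕ) (hks : k < 2 * (f + 1)) (hsk : f + 1 ≤ k)
    (lam : ℝ) (hlam : 1 ≤ lam)
    (g : Fin k → ℝ≥0 → ℝ)
    (hlip : ∀ r, LipschitzWith 1 (g r))
    (h0 : ∀ r, g r 0 = 0)
    (hcov : ∀ x : ℝ, 1 ≤ |x| →
      f + 1 ≤ {r : Fin k | ∃ t : ℝ≥0, (t : ℝ) ≤ lam * |x| ∧ g r t = x}.ncard)
    (ρ : ℝ) (hρ : ρ = 2 * (f + 1) / k) :
    2 * ρ ^ ρ / (ρ - 1) ^ (ρ - 1) + 1 ≤ lam := by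
  classical
  obtain ⟨s, hs⟩ : ∃ s, 2 * (f + 1) = s + k := ⟨2 * (f + 1) - k, by omega⟩
  have hs0 : 0 < s := by omega
  have hsk' : s ≤ k := by omega
  have hk0 : 0 < k := by omega
  set μ : ℝ := (lam - 1) / 2 with hμ
  have hμ0 : 0 ≤ μ := by rw [hμ]; linarith
  set C : Fin k → ℝ → Prop := fun r x =>
    (∃ T : ℝ≥0, (T : ℝ) ≤ lam * x ∧ g r T = x) ∧ (∃ T : ℝ≥0, (T : ℝ) ≤ lam * x ∧ g r T = -x)
    with hCdef
  have hC : ∀ x : ℝ, 1 ≤ x → s ≤ {r : Fin k | C r x}.ncard := by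
    intro x hx
    have e1 : |x| = x := abs_of_nonneg (by linarith)
    have a := hcov x (by rw [e1]; exact hx)
    have b := hcov (-x) (by rw [abs_neg, e1]; exact hx)
    rw [abs_neg, e1] at b
    rw [e1] at a
    have hu := Set.ncard_union_add_ncard_inter
      {r : Fin k | ∃ t : ℝ≥0, (t : ℝ) ≤ lam * x ∧ g r t = x}
      {r : Fin k | ∃ t : ℝ≥0, (t : ℝ) ≤ lam * x ∧ g r t = -x} (Set.toFinite _) (Set.toFinite _)
    have hle : ({r : Fin k | ∃ t : ℝ≥0, (t : ℝ) ≤ lam * x ∧ g r t = x} ∪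
      {r : Fin k | ∃ t : ℝ≥0, (t : ℝ) ≤ lam * x ∧ g r t = -x}).ncard ≤ k := by
      have := Set.ncard_le_ncard (Set.subset_univ
        ({r : Fin k | ∃ t : ℝ≥0, (t : ℝ) ≤ lam * x ∧ g r t = x} ∪
        {r : Fin k | ∃ t : ℝ≥0, (t : ℝ) ≤ lam * x ∧ g r t = -x})) (Set.toFinite _)
      simpa [Set.ncard_univ] using this
    have hCe : {r : Fin k | C r x} = {r : Fin k | ∃ t : ℝ≥0, (t : ℝ) ≤ lam * x ∧ g r t = x} ∩
      {r : Fin k | ∃ t : ℝ≥0, (t : ℝ) ≤ lam * x ∧ g r t = -x} := rfl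
    rw [hCe]
    omega
  have hmain : ∀ c : ℝ, 1 < c →
      (s + k : ℝ) ^ (s + k) / ((s : ℝ) ^ s * (k : ℝ) ^ k) ≤ (c * (μ + (c - 1))) ^ k := by
    intro c hc
    apply core_aux k s hs0 hsk'
      (fun r L e => ∀ (y : ℝ) (τ : ℝ≥0) (t : ℝ), e < y →
        (FirstBothAux (g r) y τ t ∨ FirstBothAux (-(g r)) y τ t) →
        L + t ≤ (c - 1) + ((τ : ℝ) - y) / 2) C _ c (c - 1) hc (by linarith) _ hC
    · intro r y τ t _ H
      have : t ≤ ((τ : ℝ) - y) / 2 := by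
        rcases H with H | H
        · exact firstBoth_initial (hlip r) (h0 r) H
        · exact firstBoth_initial (hlip r).neg (by simp [h0 r]) H
      linarith
    · intro r L e x hJ hx hex hCr
      obtain ⟨τ, t, hτ, H⟩ := firstBoth_exists (hlip r).continuous (h0 r) (by linarith) hCr.1 hCr.2
      refine ⟨(c - 1) + ((τ : ℝ) - x) / 2, t, ?_, hJ x τ t hex H, ?_, ?_⟩
      · rcases H with H | H
        · exact H.2.2.2.2
        · exact H.2.2.2.2
      · have h1 : (c - 1) + ((τ : ℝ) - x) / 2 ≤ (μ + (c - 1)) * x := by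
          rw [hμ]; nlinarith
        have := mul_le_mul_of_nonneg_left h1 (by linarith : (0 : ℝ) ≤ c)
        linarith
      · intro y τ' t' hty H'
        have := firstBoth_trans (hlip r) (by linarith) H H' hty
        linarith
    · nlinarith
  have hlim : (s + k : ℝ) ^ (s + k) / ((s : ℝ) ^ s * (k : ℝ) ^ k) ≤ μ ^ k := by
    have ht : Filter.Tendsto (fun c : ℝ => (c * (μ + (c - 1))) ^ k) (nhdsWithin 1 (Set.Ioi 1))
        (nhds (μ ^ k)) := by
      have hcont : Continuous (fun c : ℝ => (c * (μ + (c - 1))) ^ k) := by fun_prop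
      have := (hcont.tendsto 1).mono_left (nhdsWithin_le_nhds (s := Set.Ioi 1))
      simpa using this
    apply ge_of_tendsto ht
    filter_upwards [self_mem_nhdsWithin] with c hc
    exact hmain c hc
  have hk' : (0 : ℝ) < k := by exact_mod_cast hk0
  have hs' : (0 : ℝ) < s := by exact_mod_cast hs0
  have hρ1 : ρ = (s + k) / k := by
    rw [hρ]; congr 1; exact_mod_cast hs
  have hρ2 : ρ - 1 = s / k := by rw [hρ1]; field_simp; ring
  have hρpos : 0 < ρ := by rw [hρ1]; positivity
  have hρpos' : 0 < ρ - 1 := by rw [hρ2]; positivity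
  have hfin : ρ ^ ρ / (ρ - 1) ^ (ρ - 1) ≤ μ := by
    apply le_of_pow_le_pow_left₀ hk0.ne' hμ0
    refine le_trans (le_of_eq ?_) hlim
    rw [div_pow, ← Real.rpow_natCast, ← Real.rpow_natCast, ← Real.rpow_mul hρpos.le,
      ← Real.rpow_mul hρpos'.le]
    have e1 : ρ * (k : ℝ) = ((s + k : ℕ) : ℝ) := by rw [hρ1]; push_cast; field_simp
    have e2 : (ρ - 1) * (k : ℝ) = (s : ℝ) := by rw [hρ2]; field_simp
    rw [e1, e2, Real.rpow_natCast, Real.rpow_natCast, hρ2, hρ1, div_pow, div_pow, pow_add (k : ℝ)]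
    field_simp
  rw [mul_div_assoc]
  linarith
end

section
/- Let k and f be natural numbers with 0 < 2(f+1) - k ≤ k, and set ρ := 2(f+1)/k. Then the infimum of the set of real numbers λ ≥ 1 for which there exist 1-Lipschitz functions g_1, …, g_k : ℝ_{≥0} → ℝ with g_r(0) = 0 such that every real x with |x| ≥ 1 satisfies g_r(t) = x for some t ∈ [0, λ|x|] for at least f+1 indices r, equals 2·ρ^ρ/(ρ-1)^{ρ-1} + 1. -/
open scoped NNReal

theorem first_time (g : ℝ≥0 → ℝ) (hg : LipschitzWith 1 g) (h0 : g 0 = 0) (x : ℝ) (hx : 0 < x)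
    (T : ℝ≥0) (hT : g T = x) : ∃ t ≤ T, g t = x ∧ ∀ u < t, g u < x := by
  have hc : IsCompact (Set.Icc 0 T ∩ g ⁻¹' {x}) :=
    isCompact_Icc.inter_right (isClosed_singleton.preimage hg.continuous)
  obtain ⟨t, ⟨⟨_, htT⟩, htx⟩, hl⟩ := hc.exists_isLeast ⟨T, ⟨by simp, hT⟩⟩
  refine ⟨t, htT, htx, fun u hu => ?_⟩
  by_contra! hge
  obtain ⟨v, ⟨hv0, hv⟩, hvx⟩ := intermediate_value_Icc (zero_le) hg.continuous.continuousOn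
    (show x ∈ Set.Icc (g 0) (g u) from ⟨by rw [h0]; exact hx.le, hge⟩)
  have := hl ⟨⟨hv0, hv.trans (hu.le.trans htT)⟩, hvx⟩
  exact absurd (hv.trans_lt hu) (not_lt.mpr this)

def RInv (g : ℝ≥0 → ℝ) (h S : ℝ) : Prop :=
  ∃ τ : ℝ≥0, 2 * S + |g τ| ≤ τ ∧ ∀ t ≤ τ, |g t| ≤ h

theorem RInv.neg {g : ℝ≥0 → ℝ} {h S : ℝ} (H : RInv g h S) : RInv (fun t => - g t) h S := by
  simpa [RInv] using H

theorem robot_step_aux (g : ℝ≥0 → ℝ) (hg : LipschitzWith 1 g) (h S x T : ℝ)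
    (H : RInv g h S) (hh : h < x) (t1 : ℝ≥0) (ht1 : (t1 : ℝ) ≤ T) (hx : g t1 = x)
    (hlt : ∀ u < t1, g u < x) (t0 : ℝ≥0) (h01 : t0 ≤ t1) (hx0 : g t0 = -x) :
    ∃ y, x ≤ y ∧ RInv g y (S + y) ∧ 2 * (S + y) + x ≤ T := by
  obtain ⟨τ, hτ, hb⟩ := H
  obtain ⟨t2, ⟨h2a, h2b⟩, hmin⟩ := (isCompact_Icc (a := (0:ℝ≥0)) (b := t1)).exists_isMinOn
    ⟨0, by simp⟩ hg.continuous.continuousOn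
  have hmin' : ∀ u ≤ t1, g t2 ≤ g u := fun u hu => hmin ⟨zero_le, hu⟩
  have hy : x ≤ - g t2 := by have := hmin' t0 h01; linarith
  have hτ2 : τ ≤ t2 := by
    by_contra! hc
    have := hb t2 hc.le
    have := neg_abs_le (g t2)
    linarith
  have d1 : g τ - g t2 ≤ t2 - τ := by
    have := hg.dist_le_mul τ t2
    rw [Real.dist_eq, NNReal.dist_eq] at this
    have h3 : |(τ:ℝ) - t2| = t2 - τ := by
      rw [abs_sub_comm, abs_of_nonneg]; have : (τ:ℝ) ≤ t2 := hτ2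
      linarith
    rw [h3] at this
    have := le_abs_self (g τ - g t2)
    push_cast at *
    linarith
  have d2 : g t1 - g t2 ≤ t1 - t2 := by
    have := hg.dist_le_mul t1 t2
    rw [Real.dist_eq, NNReal.dist_eq] at this
    have h3 : |(t1:ℝ) - t2| = t1 - t2 := by
      rw [abs_of_nonneg]; have : (t2:ℝ) ≤ t1 := h2b
      linarith
    rw [h3] at this
    have := le_abs_self (g t1 - g t2)
    push_cast at *
    linarith
  have hxp : 0 < x := lt_of_le_of_lt ((abs_nonneg _).trans (hb τ le_rfl)) hh
  have := neg_abs_le (g τ)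
  refine ⟨- g t2, hy, ⟨t1, ?_, ?_⟩, ?_⟩
  · rw [hx, abs_of_pos hxp]; linarith
  · intro t ht
    rw [abs_le]
    refine ⟨by have := hmin' t ht; linarith, ?_⟩
    rcases ht.lt_or_eq with h | h
    · have := hlt t h; linarith
    · rw [h]; linarith
  · linarith

theorem robot_step (g : ℝ≥0 → ℝ) (hg : LipschitzWith 1 g) (h0 : g 0 = 0) (h S x T : ℝ)
    (H : RInv g h S) (hh : h < x) (hx : 0 < x)
    (hp : ∃ t : ℝ≥0, (t : ℝ) ≤ T ∧ g t = x) (hm : ∃ t : ℝ≥0, (t : ℝ) ≤ T ∧ g t = -x) :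
    ∃ y, x ≤ y ∧ RInv g y (S + y) ∧ 2 * (S + y) + x ≤ T := by
  obtain ⟨tp, hp1, hp2⟩ := hp
  obtain ⟨tm, hm1, hm2⟩ := hm
  have hgn : LipschitzWith 1 (fun t => - g t) := hg.neg
  obtain ⟨a, ha, hax, hal⟩ := first_time g hg h0 x hx tp hp2
  obtain ⟨b, hb, hbx, hbl⟩ := first_time (fun t => - g t) hgn (by simp [h0]) x hx tm (by simp [hm2])
  have ha' : (a:ℝ) ≤ tp := ha
  have hb' : (b:ℝ) ≤ tm := hb
  rcases le_total b a with hab | hab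
  · exact robot_step_aux g hg h S x T H hh a (by linarith) hax hal b hab (by linarith)
  · obtain ⟨y, h1, h2, h3⟩ := robot_step_aux (fun t => - g t) hgn h S x T H.neg hh b (by linarith)
      hbx hbl a hab (by simp [hax])
    exact ⟨y, h1, by simpa using h2.neg, h3⟩

theorem amgm (k s : ℕ) (hk : 0 < k) (hs : 0 < s) (t L : ℝ) (ht : 0 ≤ t) (hL : 0 ≤ L) :
    (t / k) ^ k * (L / s) ^ s ≤ ((t + L) / (k + s)) ^ (k + s) := by
  have hk' : (0:ℝ) < k := by exact_mod_cast hk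
  have hs' : (0:ℝ) < s := by exact_mod_cast hs
  have h := Real.geom_mean_le_arith_mean2_weighted (w₁ := k / (k + s)) (w₂ := s / (k + s))
    (p₁ := t / k) (p₂ := L / s) (by positivity) (by positivity) (by positivity) (by positivity)
    (by field_simp)
  have e : (k / (k + s) * (t / k) + s / (k + s) * (L / s) : ℝ) = (t + L) / (k + s) := by
    field_simp
  rw [e] at h
  have h2 := pow_le_pow_left₀ (by positivity) h (k + s)
  refine le_trans (le_of_eq ?_) h2
  rw [mul_pow, ← Real.rpow_natCast (_ ^ _) (k+s), ← Real.rpow_natCast (_ ^ _) (k+s),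
    ← Real.rpow_mul (by positivity), ← Real.rpow_mul (by positivity)]
  push_cast
  rw [div_mul_cancel₀ _ (by positivity), div_mul_cancel₀ _ (by positivity), Real.rpow_natCast,
    Real.rpow_natCast]

theorem trajectory (c β : ℝ) (hc : 0 < c) (hβ : 1 < β) :
    ∃ g : ℝ≥0 → ℝ, LipschitzWith 1 g ∧ g 0 = 0 ∧ ∀ (i : ℕ) (x : ℝ), 0 ≤ x → x ≤ c * β ^ i →
      ∃ t : ℝ≥0, (t : ℝ) ≤ 2 * (c * β ^ i) / (β - 1) + x ∧ g t = (-1) ^ i * x := by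
  have hb : 0 < β - 1 := by linarith
  set S : ℕ → ℝ := fun i => 2 * c * (β ^ i - 1) / (β - 1) with hS
  have hS0 : S 0 = 0 := by simp [hS]
  have hSs : ∀ i, S (i + 1) = S i + 2 * (c * β ^ i) := by
    intro i; simp only [hS]; field_simp; ring
  have hap : ∀ i : ℕ, 0 < c * β ^ i := fun i => by positivity
  have hSm : Monotone S := monotone_nat_of_le_succ fun i => by rw [hSs]; linarith [hap i]
  -- piece i on [S i, S (i+1)]
  have hun : ∀ (i j : ℕ) (t : ℝ), S i < t → t < S (i+1) → S j < t → t < S (j+1) → i = j := by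
    intro i j t h1 h2 h3 h4
    rcases lt_trichotomy i j with h | h | h
    · have := hSm (show i + 1 ≤ j from h); linarith
    · exact h
    · have := hSm (show j + 1 ≤ i from h); linarith
  set q : ℕ → ℝ → ℝ := fun i t => c * β ^ i - |t - (S i + c * β ^ i)| with hq
  have hq1 : ∀ i t, q i t ≤ t - S i := fun i t => by
    have := neg_abs_le (t - (S i + c * β ^ i)); simp only [hq]; linarith
  have hq2 : ∀ i t, q i t ≤ S (i+1) - t := fun i t => by
    have := le_abs_self (t - (S i + c * β ^ i)); simp only [hq]; rw [hSs]; linarith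
  have hq0 : ∀ i t, S i ≤ t → t ≤ S (i+1) → 0 ≤ q i t := fun i t h1 h2 => by
    rw [hSs] at h2
    simp only [hq]; rw [sub_nonneg, abs_le]; constructor <;> linarith
  have hqab : ∀ i (y : ℝ), |(-1 : ℝ) ^ i * y| = |y| := fun i y => by
    rw [abs_mul, abs_pow]; simp
  classical
  set G : ℝ → ℝ := fun t => if h : ∃ i, S i < t ∧ t < S (i+1) then (-1) ^ h.choose * q h.choose t else 0
    with hG
  have hG1 : ∀ i t, S i < t → t < S (i+1) → G t = (-1) ^ i * q i t := by
    intro i t h1 h2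
    have h : ∃ i, S i < t ∧ t < S (i+1) := ⟨i, h1, h2⟩
    have : h.choose = i := hun _ _ t h.choose_spec.1 h.choose_spec.2 h1 h2
    simp only [hG]
    rw [dif_pos h, this]
  have hG0 : ∀ t, (¬ ∃ i, S i < t ∧ t < S (i+1)) → G t = 0 := fun t h => by
    simp only [hG]; rw [dif_neg h]
  have hlip : ∀ t u, t ≤ u → |G t - G u| ≤ u - t := by
    intro t u htu
    by_cases h : ∃ i, S i < t ∧ t < S (i+1) <;> by_cases h' : ∃ i, S i < u ∧ u < S (i+1)
    · obtain ⟨i, h1, h2⟩ := h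
      obtain ⟨j, h3, h4⟩ := h'
      rw [hG1 i t h1 h2, hG1 j u h3 h4]
      rcases lt_trichotomy i j with h | h | h
      · have := hSm (show i + 1 ≤ j from h)
        have e := abs_sub ((-1) ^ i * q i t) ((-1) ^ j * q j u)
        rw [hqab, hqab, abs_of_nonneg (hq0 i t h1.le h2.le), abs_of_nonneg (hq0 j u h3.le h4.le)] at e
        have := hq2 i t
        have := hq1 j u
        linarith
      · subst h
        rw [← mul_sub, hqab]
        have := abs_abs_sub_abs_le (u - (S i + c * β ^ i)) (t - (S i + c * β ^ i))
        simp only [hq]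
        rw [sub_sub_sub_cancel_left]
        refine this.trans ?_
        rw [sub_sub_sub_cancel_right, abs_of_nonneg (by linarith)]
      · have := hSm (show j + 1 ≤ i from h); linarith
    · obtain ⟨i, h1, h2⟩ := h
      rw [hG1 i t h1 h2, hG0 u h', sub_zero, hqab, abs_of_nonneg (hq0 i t h1.le h2.le)]
      have : S (i+1) ≤ u := by
        by_contra! hh; exact h' ⟨i, by linarith, hh⟩
      have := hq2 i t
      linarith
    · obtain ⟨j, h3, h4⟩ := h'
      rw [hG1 j u h3 h4, hG0 t h, zero_sub, abs_neg, hqab, abs_of_nonneg (hq0 j u h3.le h4.le)]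
      have : t ≤ S j := by
        by_contra! hh; exact h ⟨j, hh, by linarith⟩
      have := hq1 j u
      linarith
    · rw [hG0 t h, hG0 u h']; simp; exact htu
  have hGS : ∀ i, G (S i) = 0 := by
    intro i
    apply hG0
    rintro ⟨j, h1, h2⟩
    rcases lt_or_ge j i with h | h
    · have := hSm (show j + 1 ≤ i from h); linarith
    · have := hSm h; linarith
  refine ⟨fun t => G t, ?_, ?_, ?_⟩
  · refine LipschitzWith.of_dist_le_mul fun t u => ?_
    rw [Real.dist_eq, NNReal.dist_eq, NNReal.coe_one, one_mul]
    rcases le_total (t:ℝ) u with h | h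
    · rw [abs_sub_comm (t:ℝ), abs_of_nonneg (sub_nonneg.2 h)]; exact hlip _ _ h
    · rw [abs_sub_comm, abs_of_nonneg (sub_nonneg.2 h)]; exact hlip _ _ h
  · have := hGS 0; rw [hS0] at this; simpa using this
  · intro i x hx0 hx1
    have hSi : 0 ≤ S i := by have := hSm (Nat.zero_le i); linarith
    refine ⟨⟨S i + x, by linarith⟩, ?_, ?_⟩
    · have : S i ≤ 2 * (c * β ^ i) / (β - 1) := by
        simp only [hS]; rw [div_le_div_iff_of_pos_right hb]; linarith
      show S i + x ≤ _
      linarith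
    · show G (S i + x) = _
      rcases hx0.eq_or_lt with h | h
      · rw [← h]; simp [hGS]
      · rw [hG1 i _ (by linarith) (by rw [hSs]; linarith [hap i])]
        simp only [hq]
        rw [add_sub_add_left_eq_sub, abs_of_nonpos (by linarith)]
        ring

theorem core (k s : ℕ) (hk : 0 < k) (hs : 0 < s) (hsk : s ≤ k) (g : Fin k → ℝ≥0 → ℝ)
    (hg : ∀ r, LipschitzWith 1 (g r)) (h0 : ∀ r, g r 0 = 0) (μ R : ℝ) (hμ : 0 ≤ μ) (hRp : 0 < R)
    (hR : ∀ y L : ℝ, 0 ≤ y → 0 ≤ L → y ^ k * L ^ s * R ^ k ≤ (y + L) ^ (k + s))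
    (cov : ∀ x : ℝ, 1 ≤ x → ∃ C : Finset (Fin k), s ≤ C.card ∧ ∀ r ∈ C,
      (∃ t : ℝ≥0, (t : ℝ) ≤ (2 * μ + 1) * x ∧ g r t = x) ∧
      (∃ t : ℝ≥0, (t : ℝ) ≤ (2 * μ + 1) * x ∧ g r t = -x)) : R ≤ μ := by
  by_contra! hlt
  set c : ℝ := (R - μ) / (2 * (1 + μ)) with hc
  have hcp : 0 < c := div_pos (by linarith) (by linarith)
  set m : ℝ := μ * (1 + c) + c with hm
  have hmR : m < R := by
    have : c * (1 + μ) = (R - μ) / 2 := by rw [hc]; field_simp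
    rw [hm]; linarith
  have hmp : 0 < m := by rw [hm]; positivity
  set δ : ℝ := (m / R) ^ k with hδ
  have hδ0 : 0 < δ := by positivity
  have hδ1 : δ < 1 := pow_lt_one₀ (by positivity) ((div_lt_one hRp).2 hmR) hk.ne'
  have key : ∀ n : ℕ, ∃ (h L : Fin k → ℝ) (B : Finset (Fin k)), B.card = s ∧
      (∀ r, RInv (g r) (h r) (L r - c)) ∧ (∀ r, c ≤ L r) ∧ (∀ b ∈ B, 1 ≤ h b) ∧
      (∀ r, r ∉ B → ∀ b ∈ B, h r ≤ h b) ∧ (∀ r, ∀ b ∈ B, L r ≤ m * h b) ∧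
      (∏ b ∈ B, h b) ^ k * (c ^ k) ^ s ≤ δ ^ n * (∏ r, L r) ^ s := by
    intro n
    induction n with
    | zero =>
      obtain ⟨B, -, hB⟩ := Finset.exists_subset_card_eq
        (show s ≤ (Finset.univ : Finset (Fin k)).card by simpa using hsk)
      refine ⟨fun _ => 1, fun _ => c, B, hB, fun r => ⟨0, by simp [h0], fun t ht => ?_⟩, fun _ => le_rfl,
        fun _ _ => le_rfl, fun _ _ _ _ => le_rfl, fun r b _ => ?_, ?_⟩
      · have : t = 0 := le_antisymm ht zero_le
        simp [this, h0]
      · rw [hm]; nlinarith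
      · simp
    | succ n ih =>
      obtain ⟨h, L, B, hB, hinv, hL, hh1, hout, hLm, hpot⟩ := ih
      have hBn : B.Nonempty := by rw [← Finset.card_pos, hB]; exact hs
      obtain ⟨r0, hr0, hmin⟩ := B.exists_min_image h hBn
      set a := h r0 with ha
      have ha1 : 1 ≤ a := hh1 r0 hr0
      obtain ⟨C, hCs, hC⟩ := cov ((1 + c) * a) (by nlinarith)
      obtain ⟨r, hrC, hrB⟩ : ∃ r ∈ C, r ∉ B.erase r0 := by
        by_contra! hcon
        have := Finset.card_le_card (show C ⊆ B.erase r0 from hcon)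
        rw [Finset.card_erase_of_mem hr0] at this
        omega
      have hra : h r ≤ a := by
        by_cases hr : r ∈ B
        · have : r = r0 := by
            by_contra hne; exact hrB (Finset.mem_erase.2 ⟨hne, hr⟩)
          rw [this]
        · exact hout r hr r0 hr0
      obtain ⟨y, hxy, hy, hyT⟩ := robot_step (g r) (hg r) (h0 r) (h r) (L r - c) ((1 + c) * a) _
        (hinv r) (by nlinarith) (by positivity) (hC r hrC).1 (hC r hrC).2
      have hay : a < y := by nlinarith
      have hLy : L r + y ≤ m * a := by
        have : L r - c + y ≤ μ * ((1 + c) * a) := by linarith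
        have : c ≤ c * a := by nlinarith
        rw [hm]; nlinarith
      have hLr := hL r
      have hge : ∀ b ∈ insert r (B.erase r0), a ≤ Function.update h r y b := by
        intro b hb
        rcases Finset.mem_insert.1 hb with e | e
        · rw [e, Function.update_self]; exact hay.le
        · have hne : b ≠ r := fun e' => hrB (e' ▸ e)
          rw [Function.update_of_ne hne]
          exact hmin b (Finset.mem_of_mem_erase e)
      refine ⟨Function.update h r y, Function.update L r (L r + y), insert r (B.erase r0), ?_, ?_, ?_,
        fun b hb => ha1.trans (hge b hb), ?_, ?_, ?_⟩
      · rw [Finset.card_insert_of_notMem hrB, Finset.card_erase_of_mem hr0]; omega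
      · intro r'
        by_cases e : r' = r
        · subst e
          rw [Function.update_self, Function.update_self]
          convert hy using 1; ring
        · rw [Function.update_of_ne e, Function.update_of_ne e]; exact hinv r'
      · intro r'
        by_cases e : r' = r
        · subst e
          rw [Function.update_self]; linarith
        · rw [Function.update_of_ne e]; exact hL r'
      · intro r' hr' b hb
        refine le_trans ?_ (hge b hb)
        have hne : r' ≠ r := fun e => hr' (by simp [e])
        rw [Function.update_of_ne hne]
        by_cases e : r' = r0
        · rw [e]
        · refine hout r' (fun hB' => hr' ?_) r0 hr0
          simp [e, hB']
      · intro r' b hb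
        refine le_trans ?_ (mul_le_mul_of_nonneg_left (hge b hb) hmp.le)
        by_cases e : r' = r
        · subst e
          rw [Function.update_self]; exact hLy
        · rw [Function.update_of_ne e]; exact hLm r' r0 hr0
      · have e1 : ∏ b ∈ insert r (B.erase r0), Function.update h r y b = y * ∏ b ∈ B.erase r0, h b := by
          rw [Finset.prod_insert hrB, Function.update_self, Finset.prod_update_of_notMem hrB]
        have e2 : ∏ b ∈ B, h b = a * ∏ b ∈ B.erase r0, h b := (Finset.mul_prod_erase B h hr0).symm
        have e3 : ∏ i, L i = L r * ∏ i ∈ Finset.univ.erase r, L i :=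
          (Finset.mul_prod_erase _ L (Finset.mem_univ r)).symm
        have e4 : ∏ i, Function.update L r (L r + y) i
            = (L r + y) * ∏ i ∈ Finset.univ.erase r, L i := by
          rw [← Finset.mul_prod_erase _ _ (Finset.mem_univ r), Function.update_self,
            Finset.prod_update_of_notMem (by simp)]
        rw [e1, e4]
        rw [e2, e3] at hpot
        have hD : 0 < ∏ i ∈ Finset.univ.erase r, L i :=
          Finset.prod_pos fun i _ => hcp.trans_le (hL i)
        have hQ : 0 < ∏ b ∈ B.erase r0, h b :=
          Finset.prod_pos fun b hb => zero_lt_one.trans_le (hh1 b (Finset.mem_of_mem_erase hb))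
        generalize (∏ i ∈ Finset.univ.erase r, L i) = D at *
        generalize (∏ b ∈ B.erase r0, h b) = Q at *
        have hLp : 0 < L r := by linarith
        have hap : 0 < a := by linarith
        have hyp : 0 < y := by linarith
        have st : y ^ k * L r ^ s ≤ δ * (a ^ k * (L r + y) ^ s) := by
          have h1 := hR y (L r) hyp.le hLp.le
          have h2 : (y + L r) ^ k ≤ (m * a) ^ k := pow_le_pow_left₀ (by positivity) (by linarith) k
          have h3 : (y + L r) ^ (k + s) ≤ (m * a) ^ k * (L r + y) ^ s := by
            rw [pow_add, add_comm (L r) y]; gcongr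
          rw [hδ, div_pow, div_mul_eq_mul_div, le_div_iff₀ (by positivity)]
          refine (h1.trans h3).trans (le_of_eq ?_)
          rw [mul_pow]; ring
        have mm := mul_le_mul st hpot (by positivity) (by positivity)
        have hpos : 0 < a ^ k * L r ^ s := by positivity
        refine le_of_mul_le_mul_left ?_ hpos
        calc a ^ k * L r ^ s * ((y * Q) ^ k * (c ^ k) ^ s)
            = y ^ k * L r ^ s * ((a * Q) ^ k * (c ^ k) ^ s) := by simp only [mul_pow]; ring
          _ ≤ _ := mm
          _ = _ := by simp only [mul_pow]; ring
  have fin : ∀ n : ℕ, (c ^ k) ^ s / (m ^ k) ^ s ≤ δ ^ n := by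
    intro n
    obtain ⟨h, L, B, hB, hinv, hL, hh1, hout, hLm, hpot⟩ := key n
    have hBn : B.Nonempty := by rw [← Finset.card_pos, hB]; exact hs
    obtain ⟨r0, hr0, hmin⟩ := B.exists_min_image h hBn
    set a := h r0 with ha
    have hap : 0 < a := zero_lt_one.trans_le (hh1 r0 hr0)
    have p1 : a ^ s ≤ ∏ b ∈ B, h b := by
      have := Finset.prod_le_prod (s := B) (f := fun _ => a) (g := h) (fun _ _ => hap.le) hmin
      simpa [hB] using this
    have p2 : ∏ r, L r ≤ (m * a) ^ k := by
      have := Finset.prod_le_prod (s := (Finset.univ : Finset (Fin k))) (f := L)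
        (g := fun _ => m * a) (fun r _ => hcp.le.trans (hL r)) (fun r _ => hLm r r0 hr0)
      simpa using this
    have p0 : 0 ≤ ∏ r, L r := Finset.prod_nonneg fun r _ => hcp.le.trans (hL r)
    have : (a ^ s) ^ k * (c ^ k) ^ s ≤ δ ^ n * ((m * a) ^ k) ^ s :=
      le_trans (by gcongr) (hpot.trans (by gcongr))
    rw [div_le_iff₀ (by positivity)]
    refine le_of_mul_le_mul_left ?_ (show 0 < (a ^ s) ^ k by positivity)
    refine this.trans (le_of_eq ?_)
    rw [mul_pow, mul_pow, ← pow_mul, ← pow_mul, ← pow_mul, ← pow_mul, mul_comm s k]; ring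
  obtain ⟨n, hn⟩ := exists_pow_lt_of_lt_one (show 0 < (c ^ k) ^ s / (m ^ k) ^ s by positivity) hδ1
  exact absurd (fin n) (not_le.2 hn)

theorem lower (k f : ℕ) (hks : k < 2 * (f + 1)) (hsk : f + 1 ≤ k)
    (ρ : ℝ) (hρ : ρ = 2 * (f + 1) / k) (lam : ℝ) (hlam : 1 ≤ lam) (g : Fin k → ℝ≥0 → ℝ)
    (hg : ∀ r, LipschitzWith 1 (g r)) (h0 : ∀ r, g r 0 = 0)
    (hc : ∀ x : ℝ, 1 ≤ |x| →
            f + 1 ≤ {r : Fin k | ∃ t : ℝ≥0, (t : ℝ) ≤ lam * |x| ∧ g r t = x}.ncard) :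
    2 * ρ ^ ρ / (ρ - 1) ^ (ρ - 1) + 1 ≤ lam := by
  have hk : 0 < k := by omega
  have hk' : (0:ℝ) < k := by exact_mod_cast hk
  obtain ⟨s, hs⟩ : ∃ s, k + s = 2 * (f + 1) := ⟨2 * (f + 1) - k, by omega⟩
  have hsp : 0 < s := by omega
  have hs' : (0:ℝ) < s := by exact_mod_cast hsp
  have hsR : (k:ℝ) + s = 2 * (f + 1) := by exact_mod_cast hs
  have hρ1 : ρ = (k + s) / k := by rw [hρ, hsR]
  have hρ2 : ρ - 1 = s / k := by rw [hρ1]; field_simp; ring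
  have hρp : 0 < ρ := by rw [hρ1]; positivity
  have hρp' : 0 < ρ - 1 := by rw [hρ2]; positivity
  set R := ρ ^ ρ / (ρ - 1) ^ (ρ - 1) with hR
  have hRp : 0 < R := by positivity
  have hRk : R ^ k = ((k + s : ℝ)) ^ (k + s) / (k ^ k * s ^ s) := by
    rw [hR, div_pow, ← Real.rpow_natCast (_ ^ _) k, ← Real.rpow_natCast (_ ^ _) k,
      ← Real.rpow_mul hρp.le, ← Real.rpow_mul hρp'.le]
    have e1 : ρ * k = ((k + s : ℕ) : ℝ) := by rw [hρ1]; push_cast; field_simp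
    have e2 : (ρ - 1) * k = (s : ℕ) := by rw [hρ2]; field_simp
    rw [e1, e2, Real.rpow_natCast, Real.rpow_natCast, hρ2, hρ1, div_pow, div_pow, pow_add (k:ℝ)]
    field_simp
  have := core k s hk hsp (by omega) g hg h0 ((lam - 1) / 2) R (by linarith) hRp ?_ ?_
  · rw [mul_div_assoc]; linarith
  · intro y L hy hL
    have := amgm k s hk hsp y L hy hL
    rw [hRk]
    rw [div_pow, div_pow, div_pow, div_mul_div_comm, div_le_div_iff₀ (by positivity) (by positivity)] at this
    rw [mul_div_assoc', div_le_iff₀ (by positivity)]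
    exact this
  · intro x hx
    have hxa : |x| = x := abs_of_nonneg (by linarith)
    have h1 := hc x (by rw [hxa]; exact hx)
    have h2 := hc (-x) (by rw [abs_neg, hxa]; exact hx)
    rw [abs_neg, hxa] at h2
    rw [hxa] at h1
    have el : 2 * ((lam - 1) / 2) + 1 = lam := by ring
    rw [el]
    classical
    rw [Set.ncard_eq_toFinset_card'] at h1 h2
    refine ⟨{r : Fin k | ∃ t : ℝ≥0, (t : ℝ) ≤ lam * x ∧ g r t = x}.toFinset ∩
      {r : Fin k | ∃ t : ℝ≥0, (t : ℝ) ≤ lam * x ∧ g r t = -x}.toFinset, ?_, fun r hr => ?_⟩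
    rotate_left
    · rw [Finset.mem_inter, Set.mem_toFinset, Set.mem_toFinset] at hr; exact hr
    · have e1 := Finset.card_union_add_card_inter
        {r : Fin k | ∃ t : ℝ≥0, (t : ℝ) ≤ lam * x ∧ g r t = x}.toFinset
        {r : Fin k | ∃ t : ℝ≥0, (t : ℝ) ≤ lam * x ∧ g r t = -x}.toFinset
      have e2 := Finset.card_le_univ
        ({r : Fin k | ∃ t : ℝ≥0, (t : ℝ) ≤ lam * x ∧ g r t = x}.toFinset ∪
        {r : Fin k | ∃ t : ℝ≥0, (t : ℝ) ≤ lam * x ∧ g r t = -x}.toFinset)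
      rw [Fintype.card_fin] at e2
      omega

theorem upper (k f : ℕ) (hks : k < 2 * (f + 1)) (hsk : f + 1 ≤ k)
    (ρ : ℝ) (hρ : ρ = 2 * (f + 1) / k) :
    ∃ g : Fin k → ℝ≥0 → ℝ,
          (∀ r, LipschitzWith 1 (g r)) ∧ (∀ r, g r 0 = 0) ∧
          ∀ x : ℝ, 1 ≤ |x| →
            f + 1 ≤ {r : Fin k | ∃ t : ℝ≥0, (t : ℝ) ≤
              (2 * ρ ^ ρ / (ρ - 1) ^ (ρ - 1) + 1) * |x| ∧ g r t = x}.ncard := by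
  have hk : 0 < k := by omega
  have hk' : (0:ℝ) < k := by exact_mod_cast hk
  have hρ1 : 1 < ρ := by
    rw [hρ, one_lt_div hk']; exact_mod_cast hks
  have hρp' : 0 < ρ - 1 := by linarith
  have hρp : 0 < ρ := by linarith
  set β := ρ / (ρ - 1) with hβ
  have hβ1 : 1 < β := by rw [hβ, one_lt_div hρp']; linarith
  have hβ0 : 0 < β := by linarith
  set α := β ^ (1 / (k:ℝ)) with hα
  have hα1 : 1 < α := Real.one_lt_rpow hβ1 (by positivity)
  have hα0 : 0 < α := by linarith
  have hαk : α ^ k = β := by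
    rw [hα, ← Real.rpow_natCast, ← Real.rpow_mul hβ0.le, one_div_mul_cancel hk'.ne', Real.rpow_one]
  have hαf : α ^ (2 * (f + 1)) = β ^ ρ := by
    rw [hα, ← Real.rpow_natCast, ← Real.rpow_mul hβ0.le, hρ]; congr 1; push_cast; ring
  have hRe : β ^ ρ / (β - 1) = ρ ^ ρ / (ρ - 1) ^ (ρ - 1) := by
    have : β - 1 = 1 / (ρ - 1) := by rw [hβ]; field_simp; ring
    rw [this, hβ, Real.div_rpow hρp.le hρp'.le, Real.rpow_sub_one hρp'.ne']
    field_simp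
  choose g hg1 hg2 hg3 using fun r : Fin k =>
    trajectory (α ^ (2 * (r:ℕ)) / α ^ (2 * k)) β (by positivity) hβ1
  refine ⟨g, hg1, hg2, fun x hx => ?_⟩
  obtain ⟨p, hp1, hpx⟩ : ∃ p : ℕ, p ≤ 1 ∧ (-1) ^ p * |x| = x := by
    rcases abs_choice x with h | h
    · exact ⟨0, by simp, by simpa using h⟩
    · exact ⟨1, le_rfl, by simp [h]⟩
  have hex : ∃ n : ℕ, |x| * α ^ (2 * k) ≤ α ^ (p * k + 2 * n) := by
    obtain ⟨n, hn⟩ := pow_unbounded_of_one_lt (|x| * α ^ (2 * k)) hα1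
    exact ⟨n, hn.le.trans (pow_le_pow_right₀ hα1.le (by omega))⟩
  classical
  obtain ⟨m, hm, hmin⟩ : ∃ m : ℕ, |x| * α ^ (2 * k) ≤ α ^ (p * k + 2 * (m + 1)) ∧
      α ^ (p * k + 2 * m) < |x| * α ^ (2 * k) := by
    have h1 := Nat.find_spec hex
    have h0 : Nat.find hex ≠ 0 := by
      intro h
      rw [h] at h1
      have h2 : α ^ (p * k + 2 * 0) < α ^ (2 * k) := pow_lt_pow_right₀ hα1 (by nlinarith)
      have h3 : 0 < α ^ (2 * k) := by positivity
      nlinarith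
    obtain ⟨m, hm⟩ := Nat.exists_eq_succ_of_ne_zero h0
    refine ⟨m, by rw [hm] at h1; exact h1, ?_⟩
    have := Nat.find_min hex (m := m) (by omega)
    exact not_le.1 this
  let e : Fin (f + 1) → Fin k := fun j => ⟨(m + 1 + j) % k, Nat.mod_lt _ hk⟩
  have he : Function.Injective e := by
    intro i j hij
    have h1 : (m + 1 + i) % k = (m + 1 + j) % k := congrArg Fin.val hij
    have h2 : (i:ℕ) ≡ j [MOD k] := Nat.ModEq.add_left_cancel' (m + 1) h1
    have h3 := Nat.ModEq.eq_of_lt_of_lt h2 (by omega) (by omega)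
    exact Fin.ext h3
  have hcard : (Set.range e).ncard = f + 1 := by
    rw [← Set.image_univ, Set.ncard_image_of_injective _ he, Set.ncard_univ, Nat.card_fin]
  rw [← hcard]
  refine Set.ncard_le_ncard ?_ (Set.toFinite _)
  rintro _ ⟨j, rfl⟩
  set M := m + 1 + (j:ℕ) with hM
  have hval : α ^ (2 * ((e j : Fin k):ℕ)) / α ^ (2 * k) * β ^ (2 * (M / k) + p)
      = α ^ (p * k + 2 * M) / α ^ (2 * k) := by
    rw [← hαk, ← pow_mul, div_mul_eq_mul_div, ← pow_add]
    congr 2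
    have : ((e j : Fin k) : ℕ) = M % k := rfl
    rw [this]
    have := Nat.mod_add_div M k
    nlinarith
  have hP : 0 < α ^ (2 * k) := by positivity
  obtain ⟨t, ht, htx⟩ := hg3 (e j) (2 * (M / k) + p) |x| (abs_nonneg x) (by
    rw [hval, le_div_iff₀ hP]
    exact hm.trans (pow_le_pow_right₀ hα1.le (by omega)))
  refine ⟨t, ht.trans ?_, ?_⟩
  · rw [hval]
    have h1 : α ^ (p * k + 2 * M) / α ^ (2 * k) ≤ |x| * β ^ ρ := by
      rw [div_le_iff₀ hP, ← hαf]
      calc α ^ (p * k + 2 * M) ≤ α ^ (p * k + 2 * m + 2 * (f + 1)) :=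
            pow_le_pow_right₀ hα1.le (by omega)
        _ = α ^ (p * k + 2 * m) * α ^ (2 * (f + 1)) := pow_add _ _ _
        _ ≤ (|x| * α ^ (2 * k)) * α ^ (2 * (f + 1)) := by gcongr
        _ = _ := by ring
    have hb : 0 < β - 1 := by linarith
    calc 2 * (α ^ (p * k + 2 * M) / α ^ (2 * k)) / (β - 1) + |x|
        ≤ 2 * (|x| * β ^ ρ) / (β - 1) + |x| := by gcongr
      _ = (2 * (β ^ ρ / (β - 1)) + 1) * |x| := by ring
      _ = _ := by rw [hRe]; ring
  · rw [htx, pow_add, pow_mul]; simpa using hpx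


/-- The optimal competitive ratio `A(k,f)` for searching the real line with `k`
robots, `f` of which are faulty of crash type, equals `2 ρ^ρ/(ρ-1)^(ρ-1) + 1`
where `ρ = 2(f+1)/k`. -/
theorem line_search_crash_competitive_ratio
    (k f : ℕ) (hks : k < 2 * (f + 1)) (hsk : f + 1 ≤ k)
    (ρ : ℝ) (hρ : ρ = 2 * (f + 1) / k) :
    sInf {lam : ℝ | 1 ≤ lam ∧
        ∃ g : Fin k → ℝ≥0 → ℝ,
          (∀ r, LipschitzWith 1 (g r)) ∧ (∀ r, g r 0 = 0) ∧
          ∀ x : ℝ, 1 ≤ |x| →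
            f + 1 ≤ {r : Fin k | ∃ t : ℝ≥0, (t : ℝ) ≤ lam * |x| ∧ g r t = x}.ncard}
      = 2 * ρ ^ ρ / (ρ - 1) ^ (ρ - 1) + 1 := by
  have hk : 0 < k := by omega
  have hk0 : (0:ℝ) < k := by exact_mod_cast hk
  have hρ1 : 1 < ρ := by
    rw [hρ, one_lt_div hk0]; exact_mod_cast hks
  have hρp : 0 < ρ - 1 := by linarith
  apply le_antisymm
  · refine csInf_le ⟨1, fun _ h => h.1⟩ ⟨?_, upper k f hks hsk ρ hρ⟩
    have : 0 ≤ 2 * ρ ^ ρ / (ρ - 1) ^ (ρ - 1) := by positivity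
    linarith
  · refine le_csInf ⟨_, ⟨?_, upper k f hks hsk ρ hρ⟩⟩ ?_
    · have : 0 ≤ 2 * ρ ^ ρ / (ρ - 1) ^ (ρ - 1) := by positivity
      linarith
    · rintro lam ⟨h1, g, hg, h0, hc⟩
      exact lower k f hks hsk ρ hρ lam h1 g hg h0 hc
end

section
/- Let m, k, f be natural numbers with f < k < m(f+1), set q := m(f+1) and λ_0 := 2·(q^q/((q-k)^{q-k} · k^k))^{1/k} + 1. Then the infimum of the set of reals λ > 1 for which there exist k round strategies σ^{(1)}, …, σ^{(k)} on m rays such that every point at distance x ≥ 1 on each of the m rays is λ-covered by at least f+1 of the k robots, equals λ_0. -/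
/-- The analytic inequality: if `μ` is below the threshold, the slack can be absorbed in `p < q`. -/
lemma exists_slack_exponent (k q : ℝ) (hk : 0 < k) (hkq : k < q) (μ : ℝ) (hμ : 0 < μ)
    (hG : k * Real.log μ < q * Real.log q - (q - k) * Real.log (q - k) - k * Real.log k) :
    ∃ p : ℝ, k < p ∧ p < q ∧ ∀ x : ℝ, 0 < x → k * Real.log (μ * x) ≤ p * Real.log (1 + x) := by
  have hc : Continuous (fun p : ℝ => p * Real.log p - (p - k) * Real.log (p - k) - k * Real.log k) := by
    have h1 := Real.continuous_mul_log
    have h2 : Continuous (fun p : ℝ => (p - k) * Real.log (p - k)) :=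
      h1.comp (continuous_id.sub continuous_const)
    exact (h1.sub h2).sub continuous_const
  have hev := (hc.tendsto q).eventually (lt_mem_nhds hG)
  have hev2 : ∀ᶠ p in nhdsWithin q (Set.Iio q), k * Real.log μ <
      p * Real.log p - (p - k) * Real.log (p - k) - k * Real.log k := hev.filter_mono nhdsWithin_le_nhds
  have hev3 : ∀ᶠ p in nhdsWithin q (Set.Iio q), k < p :=
    (lt_mem_nhds hkq).filter_mono nhdsWithin_le_nhds
  have hev4 : ∀ᶠ p in nhdsWithin q (Set.Iio q), p < q := self_mem_nhdsWithin
  obtain ⟨p, hp1, hp2, hp3⟩ := (hev2.and (hev3.and hev4)).exists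
  refine ⟨p, hp2, hp3, fun x hx => ?_⟩
  have hp : 0 < p := hk.trans hp2
  have hd : 0 < p - k := by linarith
  have hu : p / (p - k) ∈ Set.Ioi (0 : ℝ) := by
    have : 0 < p / (p - k) := by positivity
    exact this
  have hv : x * p / k ∈ Set.Ioi (0 : ℝ) := by
    have : 0 < x * p / k := by positivity
    exact this
  have hw1 : 0 ≤ (p - k) / p := by positivity
  have hw2 : 0 ≤ k / p := by positivity
  have hw : (p - k) / p + k / p = 1 := by field_simp; ring
  have key := strictConcaveOn_log_Ioi.concaveOn.2 hu hv hw1 hw2 hw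
  simp only [smul_eq_mul] at key
  have e1 : (p - k) / p * (p / (p - k)) + k / p * (x * p / k) = 1 + x := by
    field_simp
  rw [e1, Real.log_div hp.ne' hd.ne', Real.log_div (by positivity) hk.ne',
    Real.log_mul hx.ne' hp.ne'] at key
  rw [Real.log_mul hμ.ne' hx.ne']
  have key2 := mul_le_mul_of_nonneg_left key hp.le
  have e2 : p * ((p - k) / p * (Real.log p - Real.log (p - k)) +
      k / p * (Real.log x + Real.log p - Real.log k)) =
      (p - k) * (Real.log p - Real.log (p - k)) + k * (Real.log x + Real.log p - Real.log k) := by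
    field_simp
  rw [e2] at key2
  linarith

/-- Bound for the total logarithmic length covered by a single robot up to distance `N`. -/
lemma robot_load_bound (t : ℕ → ℝ) (ht : ∀ j, 1 ≤ t j) (μ : ℝ) (hμ : 0 < μ) (c : ℝ) (hc : 1 ≤ c)
    (hx : ∀ x : ℝ, 0 < x → Real.log (μ * x) ≤ c * Real.log (1 + x)) (N : ℝ) (hN : 1 ≤ N) (n : ℕ) :
    ∑ j ∈ Finset.range (n + 1), max 0 (Real.log (min (t j) N) -
        Real.log (max 1 ((∑ l ∈ Finset.range j, t l) / μ)))
      ≤ c * Real.log (min (∑ l ∈ Finset.range (n + 1), t l) ((μ + 1) * N)) := by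
  have hNN : N ≤ (μ + 1) * N := by nlinarith
  induction n with
  | zero =>
    have h1 : 1 ≤ min (t 0) N := le_min (ht 0) hN
    have h2 : 0 ≤ Real.log (min (t 0) N) := Real.log_nonneg h1
    have h3 : Real.log (min (t 0) N) ≤ Real.log (min (t 0) ((μ + 1) * N)) :=
      Real.log_le_log (by linarith) (min_le_min le_rfl hNN)
    simp [h2]
    nlinarith
  | succ n ih =>
    rw [Finset.sum_range_succ]
    set S := ∑ l ∈ Finset.range (n + 1), t l with hS
    have hS2 : ∑ l ∈ Finset.range (n + 1 + 1), t l = S + t (n + 1) := by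
      rw [Finset.sum_range_succ]
    rw [hS2]
    have hS1 : 1 ≤ S := by
      rw [hS, Finset.sum_range_succ']
      have : 0 ≤ ∑ l ∈ Finset.range n, t (l + 1) :=
        Finset.sum_nonneg fun l _ => by linarith [ht (l + 1)]
      linarith [ht 0]
    have ht1 := ht (n + 1)
    have hm1 : 1 ≤ min (t (n + 1)) N := le_min ht1 hN
    have hmin1 : 1 ≤ min S ((μ + 1) * N) := le_min hS1 (by linarith)
    have hmono : Real.log (min S ((μ + 1) * N)) ≤
        Real.log (min (S + t (n + 1)) ((μ + 1) * N)) :=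
      Real.log_le_log (by linarith) (min_le_min (by linarith) le_rfl)
    by_cases hcase : S ≤ μ * N
    · have e1 : min S ((μ + 1) * N) = S := min_eq_left (by linarith)
      rw [e1] at ih hmono
      set t' := min (t (n + 1)) N with ht'
      have h4 : S + t' ≤ min (S + t (n + 1)) ((μ + 1) * N) := by
        apply le_min
        · linarith [min_le_left (t (n + 1)) N]
        · linarith [min_le_right (t (n + 1)) N]
      have h5 : Real.log (S + t') ≤ Real.log (min (S + t (n + 1)) ((μ + 1) * N)) :=
        Real.log_le_log (by linarith) h4
      have h6 := hx (t' / S) (by positivity)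
      have h7 : 1 + t' / S = (S + t') / S := by field_simp
      have hSp : 0 < S := by linarith
      have htp : 0 < t' := by linarith
      rw [h7, Real.log_div (by positivity) hSp.ne', ← mul_div_assoc,
        Real.log_div (by positivity) hSp.ne', Real.log_mul hμ.ne' htp.ne'] at h6
      have h8 : Real.log (S / μ) ≤ Real.log (max 1 (S / μ)) :=
        Real.log_le_log (by positivity) (le_max_right _ _)
      rw [Real.log_div hSp.ne' hμ.ne'] at h8
      have h9 : Real.log S ≤ Real.log (S + t') := Real.log_le_log hSp (by linarith)
      have h10 : max 0 (Real.log t' - Real.log (max 1 (S / μ))) ≤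
          c * (Real.log (S + t') - Real.log S) := by
        apply max_le
        · exact mul_nonneg (by linarith) (by linarith)
        · linarith
      nlinarith
    · have h4 : Real.log (min (t (n + 1)) N) ≤ Real.log (max 1 (S / μ)) := by
        apply Real.log_le_log (by linarith)
        refine (min_le_right _ _).trans (le_trans ?_ (le_max_right _ _))
        rw [le_div_iff₀ hμ]
        linarith [not_le.1 hcase]
      rw [max_eq_left (by linarith)]
      nlinarith

open Classical in
/-- A `q`-fold cover of `[1, N]` forces `q log N ≤ k c log ((μ + 1) N)`. -/
lemma cover_bound (m k f : ℕ) (σ : Fin k → ℕ → Fin m × ℝ) (hσ : ∀ r j, 1 ≤ (σ r j).2)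
    (μ : ℝ) (hμ : 0 < μ)
    (hcov : ∀ (i : Fin m) (x : ℝ), 1 ≤ x →
            f + 1 ≤ {r : Fin k | ∃ j : ℕ, (σ r j).1 = i ∧ x ≤ (σ r j).2 ∧
                  (∑ l ∈ Finset.range j, (σ r l).2) ≤ μ * x}.ncard)
    (c : ℝ) (hc : 1 ≤ c)
    (hx : ∀ x : ℝ, 0 < x → Real.log (μ * x) ≤ c * Real.log (1 + x)) (N : ℝ) (hN : 1 ≤ N) :
    ((m * (f + 1) : ℕ) : ℝ) * Real.log N ≤ k * (c * Real.log ((μ + 1) * N)) := by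
  obtain ⟨M, hM⟩ := exists_nat_gt (μ * N)
  set S : Fin k → ℕ → ℝ := fun r j => ∑ l ∈ Finset.range j, (σ r l).2 with hSdef
  have hSj : ∀ (r : Fin k) (j : ℕ), (j : ℝ) ≤ S r j := by
    intro r j
    have := Finset.card_nsmul_le_sum (Finset.range j) (fun l => (σ r l).2) 1 (fun l _ => hσ r l)
    simpa using this
  set a : Fin k → ℕ → ℝ := fun r j => Real.log (max 1 (S r j / μ)) with ha
  set b : Fin k → ℕ → ℝ := fun r j => Real.log (min (σ r j).2 N) with hb
  have hpt : ∀ y ∈ Set.Icc 0 (Real.log N), ((m * (f + 1) : ℕ) : ENNReal) ≤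
      ∑ r, ∑ j ∈ Finset.range (M + 1), (Set.Icc (a r j) (b r j)).indicator (fun _ => (1 : ENNReal)) y := by
    intro y hy
    have hx1 : 1 ≤ Real.exp y := Real.one_le_exp hy.1
    have hxN : Real.exp y ≤ N := by
      rw [← Real.exp_log (by linarith : 0 < N)]; exact Real.exp_le_exp.2 hy.2
    have step : ∀ i : Fin m, ((f + 1 : ℕ) : ENNReal) ≤ ∑ r, ∑ j ∈ Finset.range (M + 1),
        if (σ r j).1 = i then (Set.Icc (a r j) (b r j)).indicator (fun _ => (1 : ENNReal)) y else 0 := by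
      intro i
      have h1 := hcov i (Real.exp y) hx1
      rw [Set.ncard_eq_toFinset_card'] at h1
      refine le_trans (Nat.cast_le.2 h1) ?_
      rw [Finset.card_eq_sum_ones, Nat.cast_sum]
      refine le_trans ?_ (Finset.sum_le_sum_of_subset (Finset.subset_univ
        (Set.toFinset {r : Fin k | ∃ j : ℕ, (σ r j).1 = i ∧ Real.exp y ≤ (σ r j).2 ∧
                  (∑ l ∈ Finset.range j, (σ r l).2) ≤ μ * Real.exp y})))
      apply Finset.sum_le_sum
      intro r hr
      simp only [Set.mem_toFinset, Set.mem_ofPred_eq] at hr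
      obtain ⟨j, hj1, hj2, hj3⟩ := hr
      have hjM : j ∈ Finset.range (M + 1) := by
        rw [Finset.mem_range]
        have h2 : (j : ℝ) < M := by
          have := hSj r j
          have h3 : μ * Real.exp y ≤ μ * N := by gcongr
          simp only [hSdef] at this
          linarith
        have : j < M := by exact_mod_cast h2
        omega
      refine le_trans ?_ (Finset.single_le_sum (f := fun j => if (σ r j).1 = i then
        (Set.Icc (a r j) (b r j)).indicator (fun _ => (1 : ENNReal)) y else 0)
        (fun _ _ => zero_le) hjM)
      have hmem : y ∈ Set.Icc (a r j) (b r j) := by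
        constructor
        · rw [ha]
          have : max 1 (S r j / μ) ≤ Real.exp y := by
            apply max_le hx1
            rw [div_le_iff₀ hμ]
            simp only [hSdef]
            linarith
          calc Real.log (max 1 (S r j / μ)) ≤ Real.log (Real.exp y) :=
                Real.log_le_log (by positivity) this
            _ = y := Real.log_exp y
        · calc y = Real.log (Real.exp y) := (Real.log_exp y).symm
            _ ≤ _ := Real.log_le_log (by positivity) (le_min hj2 hxN)
      simp [hj1, hmem]
    calc ((m * (f + 1) : ℕ) : ENNReal) = ∑ i : Fin m, ((f + 1 : ℕ) : ENNReal) := by simp [mul_add]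
      _ ≤ ∑ i : Fin m, _ := Finset.sum_le_sum fun i _ => step i
      _ = _ := by
        rw [Finset.sum_comm]
        refine Finset.sum_congr rfl fun r _ => ?_
        rw [Finset.sum_comm]
        refine Finset.sum_congr rfl fun j _ => ?_
        simp
  have hlogN : 0 ≤ Real.log N := Real.log_nonneg hN
  have hint : ((m * (f + 1) : ℕ) : ENNReal) * ENNReal.ofReal (Real.log N) ≤
      ∑ r, ∑ j ∈ Finset.range (M + 1), ENNReal.ofReal (b r j - a r j) := by
    calc ((m * (f + 1) : ℕ) : ENNReal) * ENNReal.ofReal (Real.log N)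
        = ∫⁻ y in Set.Icc 0 (Real.log N), ((m * (f + 1) : ℕ) : ENNReal) := by
          rw [MeasureTheory.setLIntegral_const, Real.volume_Icc, sub_zero]
      _ ≤ ∫⁻ y in Set.Icc 0 (Real.log N), ∑ r, ∑ j ∈ Finset.range (M + 1),
          (Set.Icc (a r j) (b r j)).indicator (fun _ => (1 : ENNReal)) y :=
          MeasureTheory.setLIntegral_mono' measurableSet_Icc hpt
      _ ≤ ∫⁻ y, ∑ r, ∑ j ∈ Finset.range (M + 1),
          (Set.Icc (a r j) (b r j)).indicator (fun _ => (1 : ENNReal)) y :=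
          MeasureTheory.setLIntegral_le_lintegral _ _
      _ = _ := by
          have hmeas : ∀ r j, Measurable (fun y =>
            (Set.Icc (a r j) (b r j)).indicator (fun _ => (1 : ENNReal)) y) := fun r j =>
            measurable_const.indicator measurableSet_Icc
          rw [MeasureTheory.lintegral_finsetSum _ (fun r _ =>
            Finset.measurable_fun_sum _ fun j _ => hmeas r j)]
          refine Finset.sum_congr rfl fun r _ => ?_
          rw [MeasureTheory.lintegral_finsetSum _ (fun j _ => hmeas r j)]
          refine Finset.sum_congr rfl fun j _ => ?_
          rw [MeasureTheory.lintegral_indicator_const measurableSet_Icc, Real.volume_Icc, one_mul]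
  have hreal : ((m * (f + 1) : ℕ) : ℝ) * Real.log N ≤
      ∑ r, ∑ j ∈ Finset.range (M + 1), max 0 (b r j - a r j) := by
    have hnn : ∀ r, 0 ≤ ∑ j ∈ Finset.range (M + 1), max 0 (b r j - a r j) := fun r =>
      Finset.sum_nonneg fun j _ => le_max_left _ _
    rw [← ENNReal.ofReal_le_ofReal_iff (Finset.sum_nonneg fun r _ => hnn r),
      ENNReal.ofReal_mul (by positivity), ENNReal.ofReal_natCast,
      ENNReal.ofReal_sum_of_nonneg (fun r _ => hnn r)]
    refine hint.trans (Finset.sum_le_sum fun r _ => ?_)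
    rw [ENNReal.ofReal_sum_of_nonneg (fun j _ => le_max_left _ _)]
    exact Finset.sum_le_sum fun j _ => ENNReal.ofReal_le_ofReal (le_max_right _ _)
  refine hreal.trans ?_
  have hr : ∀ r ∈ (Finset.univ : Finset (Fin k)),
      ∑ j ∈ Finset.range (M + 1), max 0 (b r j - a r j) ≤ c * Real.log ((μ + 1) * N) := by
    intro r _
    refine (robot_load_bound (fun j => (σ r j).2) (hσ r) μ hμ c hc hx N hN M).trans ?_
    have h1 : (1 : ℝ) ≤ S r (M + 1) := by
      have := hSj r (M + 1)
      push_cast at this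
      have : (0 : ℝ) ≤ M := by positivity
      linarith
    have : Real.log (min (S r (M + 1)) ((μ + 1) * N)) ≤ Real.log ((μ + 1) * N) := by
      apply Real.log_le_log _ (min_le_right _ _)
      apply lt_min (by linarith) (by positivity)
    exact mul_le_mul_of_nonneg_left this (by linarith)
  refine (Finset.sum_le_sum hr).trans ?_
  simp

/-- The lower bound. -/
lemma ray_lower_bound (m k f : ℕ) (hfk : f < k) (hk : k < m * (f + 1))
    (σ : Fin k → ℕ → Fin m × ℝ) (hσ : ∀ r j, 1 ≤ (σ r j).2)
    (μ : ℝ) (hμ : 0 < μ)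
    (hcov : ∀ (i : Fin m) (x : ℝ), 1 ≤ x →
            f + 1 ≤ {r : Fin k | ∃ j : ℕ, (σ r j).1 = i ∧ x ≤ (σ r j).2 ∧
                  (∑ l ∈ Finset.range j, (σ r l).2) ≤ μ * x}.ncard) :
    (((m * (f + 1) : ℕ) : ℝ) ^ (m * (f + 1)) /
            (((m * (f + 1) - k : ℕ) : ℝ) ^ (m * (f + 1) - k) * (k : ℝ) ^ k))
            ^ ((1 : ℝ) / k) ≤ μ := by
  by_contra! hlt
  have hk0 : 0 < k := by omega
  generalize hq : m * (f + 1) = q at *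
  have hkR : (0 : ℝ) < k := by exact_mod_cast hk0
  have hkqR : (k : ℝ) < q := by exact_mod_cast hk
  have hqR : (0 : ℝ) < q := hkR.trans hkqR
  have hcast : ((q - k : ℕ) : ℝ) = (q : ℝ) - k := by push_cast [hk.le]; ring
  have hdR : (0 : ℝ) < (q : ℝ) - k := by linarith
  rw [hcast] at hlt
  have hG : (k : ℝ) * Real.log μ < q * Real.log q - ((q : ℝ) - k) * Real.log (q - k) - k * Real.log k := by
    have h := Real.log_lt_log hμ hlt
    rw [Real.log_rpow (by positivity), Real.log_div (by positivity) (by positivity),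
      Real.log_mul (by positivity) (by positivity), Real.log_pow, Real.log_pow, Real.log_pow,
      hcast] at h
    have h2 := mul_lt_mul_of_pos_left h hkR
    rw [← mul_assoc, mul_one_div_cancel hkR.ne', one_mul] at h2
    linarith
  obtain ⟨p, hp1, hp2, hp3⟩ := exists_slack_exponent k q hkR hkqR μ hμ hG
  have hb : ∀ N : ℝ, 1 ≤ N → (q : ℝ) * Real.log N ≤ p * Real.log ((μ + 1) * N) := by
    intro N hN
    have := cover_bound m k f σ hσ μ hμ hcov (p / k) ((one_le_div hkR).2 hp1.le) (by
      intro x hx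
      have := hp3 x hx
      rw [div_mul_eq_mul_div, le_div_iff₀ hkR]
      linarith) N hN
    rw [hq] at this
    convert this using 1
    field_simp
  have h2 := hb (Real.exp ((p * Real.log (μ + 1) + 1) / (q - p))) (by
    apply Real.one_le_exp
    have : 0 ≤ Real.log (μ + 1) := Real.log_nonneg (by linarith)
    have : 0 < (q : ℝ) - p := by linarith
    have : 0 < p := by linarith
    positivity)
  rw [Real.log_mul (by positivity) (Real.exp_pos _).ne', Real.log_exp] at h2
  have hqp : 0 < (q : ℝ) - p := by linarith
  have h3 : ((q : ℝ) - p) * ((p * Real.log (μ + 1) + 1) / (q - p)) = p * Real.log (μ + 1) + 1 := by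
    field_simp
  linarith

/-- The optimal exponential strategy. -/
lemma ray_upper_bound (m k f : ℕ) (hfk : f < k) (hk : k < m * (f + 1)) (μ : ℝ)
    (hμ : μ = (((m * (f + 1) : ℕ) : ℝ) ^ (m * (f + 1)) /
            (((m * (f + 1) - k : ℕ) : ℝ) ^ (m * (f + 1) - k) * (k : ℝ) ^ k))
            ^ ((1 : ℝ) / k)) :
    ∃ σ : Fin k → ℕ → Fin m × ℝ,
          (∀ r j, 1 ≤ (σ r j).2) ∧
          ∀ (i : Fin m) (x : ℝ), 1 ≤ x →
            f + 1 ≤ {r : Fin k | ∃ j : ℕ, (σ r j).1 = i ∧ x ≤ (σ r j).2 ∧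
                  (∑ l ∈ Finset.range j, (σ r l).2) ≤ μ * x}.ncard := by
  have hk0 : 0 < k := by omega
  have hm0 : 0 < m := by
    rcases Nat.eq_zero_or_pos m with h | h
    · simp [h] at hk
    · exact h
  obtain ⟨q, hq⟩ : ∃ q, q = m * (f + 1) := ⟨_, rfl⟩
  rw [← hq] at hk hμ
  obtain ⟨d, rfl⟩ : ∃ d, q = d + k := ⟨q - k, by omega⟩
  have hd0 : 0 < d := by omega
  rw [Nat.add_sub_cancel] at hμ
  have hkR : (0 : ℝ) < k := by exact_mod_cast hk0
  have hdR : (0 : ℝ) < d := by exact_mod_cast hd0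
  set b : ℝ := (((d + k : ℕ) : ℝ) / d) ^ ((1 : ℝ) / k) with hb
  have hbk : b ^ k = ((d + k : ℕ) : ℝ) / d := by
    rw [hb, one_div, Real.rpow_inv_natCast_pow (by positivity) hk0.ne']
  have hb1 : 1 < b := by
    apply Real.one_lt_rpow
    · rw [one_lt_div hdR]; push_cast; linarith
    · positivity
  have hb0 : 0 < b := by linarith
  have hbq : b ^ (d + k) * (d / k) = μ := by
    have hμ0 : 0 ≤ μ := by rw [hμ]; positivity
    refine (pow_left_inj₀ (by positivity) hμ0 hk0.ne').1 ?_
    rw [hμ, one_div, Real.rpow_inv_natCast_pow (by positivity) hk0.ne', mul_pow, ← pow_mul,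
      mul_comm (d + k) k, pow_mul, hbk, div_pow, div_pow]
    rw [pow_add (d : ℝ) d k]
    field_simp
  -- robot `r` goes in round `n` to distance `b ^ (k n + (m r mod k))`
  have hmZ : (0 : ℤ) < m := by exact_mod_cast hm0
  have hkZ : (0 : ℤ) < k := by exact_mod_cast hk0
  refine ⟨fun r n => (⟨(((n : ℤ) - ((m * r / k : ℕ) : ℤ)) % m).toNat, ?_⟩,
    b ^ (k * n + (m * r) % k)), ?_, ?_⟩
  · have h1 := Int.emod_nonneg ((n : ℤ) - ((m * r / k : ℕ) : ℤ)) hmZ.ne'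
    have h2 := Int.emod_lt_of_pos ((n : ℤ) - ((m * r / k : ℕ) : ℤ)) hmZ
    omega
  · intro r j
    exact one_le_pow₀ hb1.le
  intro i x hx
  obtain ⟨n0, hn1, hn2⟩ := exists_nat_pow_near hx hb1
  -- the exponents `k i + m (u + s)`, `0 ≤ s ≤ f`, lie in `[n0 + 1, n0 + q]`
  obtain ⟨u, hu1, hu2⟩ : ∃ u : ℤ, (n0 : ℤ) + 1 ≤ k * (i : ℕ) + m * u ∧
      (k * (i : ℕ) + m * u : ℤ) ≤ n0 + m := by
    refine ⟨-((k * (i : ℕ) - (n0 + 1)) / m), ?_⟩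
    have h1 := Int.emod_nonneg ((k : ℤ) * (i : ℕ) - (n0 + 1)) hmZ.ne'
    have h2 := Int.emod_lt_of_pos ((k : ℤ) * (i : ℕ) - (n0 + 1)) hmZ
    have h3 := Int.emod_add_mul_ediv ((k : ℤ) * (i : ℕ) - (n0 + 1)) m
    constructor <;> linarith
  let R : Fin (f + 1) → Fin k := fun s => ⟨((u + (s : ℕ)) % k).toNat, by
    have h1 := Int.emod_nonneg (u + (s : ℕ)) hkZ.ne'
    have h2 := Int.emod_lt_of_pos (u + (s : ℕ)) hkZ
    omega⟩
  have hRval : ∀ s, ((R s : ℕ) : ℤ) = (u + (s : ℕ)) % k := fun s =>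
    Int.toNat_of_nonneg (Int.emod_nonneg _ hkZ.ne')
  have hRinj : Function.Injective R := by
    intro s s' h
    have h1 : (u + (s : ℕ)) % k = (u + (s' : ℕ)) % k := by rw [← hRval, ← hRval, h]
    have h2 : ((s : ℕ) : ℤ) ≡ (s' : ℕ) [ZMOD k] := Int.ModEq.add_left_cancel' u h1
    have h3 := (Int.natCast_modEq_iff.1 h2)
    have := Nat.ModEq.eq_of_lt_of_lt h3 (by omega) (by omega)
    exact Fin.ext this
  have hsub : Set.range R ⊆ {r : Fin k | ∃ n : ℕ,
      ((⟨(((n : ℤ) - ((m * r / k : ℕ) : ℤ)) % m).toNat, by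
        have h1 := Int.emod_nonneg ((n : ℤ) - ((m * r / k : ℕ) : ℤ)) hmZ.ne'
        have h2 := Int.emod_lt_of_pos ((n : ℤ) - ((m * r / k : ℕ) : ℤ)) hmZ
        omega⟩ : Fin m) = i) ∧ x ≤ b ^ (k * n + (m * r) % k) ∧
        (∑ l ∈ Finset.range n, b ^ (k * l + (m * r) % k)) ≤ μ * x} := by
    rintro _ ⟨s, rfl⟩
    have hr := hRval s
    generalize hrr : R s = r at hr
    set l : ℤ := (u + (s : ℕ)) / k with hl
    have hdiv : (r : ℕ) + k * l = u + (s : ℕ) := by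
      rw [hr]; exact Int.emod_add_mul_ediv _ _
    have hmr : ((m * r % k : ℕ) : ℤ) + k * ((m * r / k : ℕ) : ℤ) = m * (r : ℕ) := by
      exact_mod_cast Nat.mod_add_div (m * r) k
    have hmrlt : m * (r : ℕ) % k < k := Nat.mod_lt _ hk0
    have hs : (s : ℕ) ≤ f := by omega
    -- the round
    have hE : (k : ℤ) * ((i : ℕ) + m * l + ((m * r / k : ℕ) : ℤ)) + ((m * r % k : ℕ) : ℤ)
        = k * (i : ℕ) + m * u + m * (s : ℕ) := by
      linear_combination hmr + m * hdiv
    have hms : (0 : ℤ) ≤ m * (s : ℕ) := by positivity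
    have hms2 : (m : ℤ) * (s : ℕ) ≤ m * f := by
      have : ((s : ℕ) : ℤ) ≤ f := by exact_mod_cast hs
      gcongr
    have hnn : 0 ≤ (i : ℕ) + m * l + ((m * r / k : ℕ) : ℤ) := by
      by_contra! hneg
      have h1 : (i : ℕ) + m * l + ((m * r / k : ℕ) : ℤ) ≤ -1 := by omega
      have h2 : (k : ℤ) * ((i : ℕ) + m * l + ((m * r / k : ℕ) : ℤ)) ≤ k * (-1) := by gcongr
      have h3 : ((m * r % k : ℕ) : ℤ) < k := by exact_mod_cast hmrlt
      have h4 : (0 : ℤ) ≤ n0 := by positivity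
      linarith
    obtain ⟨n, hn⟩ := Int.eq_ofNat_of_zero_le hnn
    rw [hn] at hE
    have hE1 : n0 + 1 ≤ k * n + m * r % k := by
      zify; push_cast at hE ⊢; linarith
    have hE2 : k * n + m * r % k ≤ n0 + (d + k) := by
      rw [hq]; zify; push_cast at hE ⊢; linarith
    refine ⟨n, ?_, ?_, ?_⟩
    · apply Fin.ext
      have h1 : (n : ℤ) - ((m * r / k : ℕ) : ℤ) = (i : ℕ) + m * l := by
        linarith
      simp only [h1]
      rw [Int.add_mul_emod_self_left, Int.emod_eq_of_lt (by positivity) (by exact_mod_cast i.2)]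
      simp
    · exact hn2.le.trans (pow_le_pow_right₀ hb1.le hE1)
    · have hbk1 : b ^ k - 1 = k / d := by
        rw [hbk]; push_cast; field_simp; ring
      have hsum : (∑ l ∈ Finset.range n, b ^ (k * l + (m * r) % k)) * (k / d)
          = b ^ (k * n + (m * r) % k) - b ^ ((m * r) % k) := by
        rw [← hbk1]
        have := geom_sum_mul (b ^ k) n
        simp_rw [pow_add, pow_mul]
        rw [← Finset.sum_mul, mul_right_comm, this]
        ring
      have h1 : b ^ (k * n + (m * r) % k) ≤ x * b ^ (d + k) := by
        calc _ ≤ b ^ (n0 + (d + k)) := pow_le_pow_right₀ hb1.le hE2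
          _ = b ^ n0 * b ^ (d + k) := pow_add _ _ _
          _ ≤ _ := by gcongr
      have h2 : (∑ l ∈ Finset.range n, b ^ (k * l + (m * r) % k)) * (k / d) ≤ x * b ^ (d + k) := by
        rw [hsum]
        have : 0 < b ^ ((m * r : ℕ) % k) := by positivity
        linarith
      have h3 : (∑ l ∈ Finset.range n, b ^ (k * l + (m * r) % k))
          = (∑ l ∈ Finset.range n, b ^ (k * l + (m * r) % k)) * (k / d) * (d / k) := by
        field_simp
      rw [h3, ← hbq]
      calc _ ≤ x * b ^ (d + k) * (d / k) := by gcongr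
        _ = _ := by ring
  have hcard := Set.ncard_le_ncard hsub (Set.toFinite _)
  have hrange : (Set.range R).ncard = f + 1 := by
    rw [← Set.image_univ, Set.ncard_image_of_injective _ hRinj]
    simp
  rw [hrange] at hcard
  exact hcard

/-- The optimal competitive ratio `A(m,k,f)` for searching `m` rays with `k`
robots, `f` of which are faulty of crash type, equals
`λ₀ = 2 (q^q/((q-k)^(q-k) k^k))^(1/k) + 1` with `q = m(f+1)`.
A round strategy is a sequence `σ : ℕ → Fin m × ℝ`: in round `j` the robot goes
to distance `(σ j).2 ≥ 1` along ray `(σ j).1` and back; a point at distance `x`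
on ray `i` is `λ`-covered by the robot if in some round `j` we have
`(σ j).1 = i`, `x ≤ (σ j).2` and the sum of previous turning distances is at
most `((λ-1)/2)·x`. -/
theorem m_ray_search_crash_competitive_ratio
    (m k f : ℕ) (hfk : f < k) (hk : k < m * (f + 1)) :
    sInf {lam : ℝ | 1 < lam ∧
        ∃ σ : Fin k → ℕ → Fin m × ℝ,
          (∀ r j, 1 ≤ (σ r j).2) ∧
          ∀ (i : Fin m) (x : ℝ), 1 ≤ x →
            f + 1 ≤ {r : Fin k | ∃ j : ℕ, (σ r j).1 = i ∧ x ≤ (σ r j).2 ∧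
                  (∑ l ∈ Finset.range j, (σ r l).2) ≤ ((lam - 1) / 2) * x}.ncard}
      = 2 * (((m * (f + 1) : ℕ) : ℝ) ^ (m * (f + 1)) /
            (((m * (f + 1) - k : ℕ) : ℝ) ^ (m * (f + 1) - k) * (k : ℝ) ^ k))
            ^ ((1 : ℝ) / k) + 1 := by
  have hk0 : 0 < k := by omega
  have hkR : (0 : ℝ) < k := by exact_mod_cast hk0
  have hqR : (0 : ℝ) < ((m * (f + 1) : ℕ) : ℝ) := by
    exact_mod_cast hk0.trans hk
  have hdR : (0 : ℝ) < ((m * (f + 1) - k : ℕ) : ℝ) := by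
    exact_mod_cast Nat.sub_pos_of_lt hk
  apply IsLeast.csInf_eq
  constructor
  · refine ⟨?_, ?_⟩
    · have : 0 < (((m * (f + 1) : ℕ) : ℝ) ^ (m * (f + 1)) /
            (((m * (f + 1) - k : ℕ) : ℝ) ^ (m * (f + 1) - k) * (k : ℝ) ^ k))
            ^ ((1 : ℝ) / k) := by positivity
      linarith
    · rw [add_sub_cancel_right, mul_div_cancel_left₀ _ (two_ne_zero)]
      exact ray_upper_bound m k f hfk hk _ rfl
  · rintro lam ⟨hlam, σ, hσ, hcov⟩
    have := ray_lower_bound m k f hfk hk σ hσ ((lam - 1) / 2) (by linarith) hcov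
    linarith
end

section
/- Let k and q be natural numbers with q > k ≥ 1. Then C(k,q), defined as the infimum of all λ > 1 for which there exist k ORC strategies producing a q-fold λ-cover of ℝ_{≥1}, equals 2·(q^q/((q-k)^{q-k} · k^k))^{1/k} + 1. -/
open MeasureTheory in
lemma orc_measure {ι : Type*} (s : Finset ι) (A B : ι → ℝ) (q : ℕ) (L : ℝ) (_hL : 0 ≤ L)
    (h : ∀ y ∈ Set.Icc 0 L, q ≤ (s.filter (fun p => A p ≤ y ∧ y ≤ B p)).card) :
    (q : ℝ) * L ≤ ∑ p ∈ s, max (B p - A p) 0 := by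
  have h1 : ENNReal.ofReal ((q : ℝ) * L) ≤ ENNReal.ofReal (∑ p ∈ s, max (B p - A p) 0) := by
    calc ENNReal.ofReal ((q : ℝ) * L) = ∫⁻ y in Set.Icc 0 L, (q : ENNReal) := by
          rw [setLIntegral_const, Real.volume_Icc, ENNReal.ofReal_mul (by positivity)]
          simp
      _ ≤ ∫⁻ y in Set.Icc 0 L, ∑ p ∈ s, (Set.Icc (A p) (B p)).indicator (fun _ => (1 : ENNReal)) y := by
          apply setLIntegral_mono' measurableSet_Icc
          intro y hy
          have := h y hy
          rw [Finset.card_filter] at this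
          have h2 : (q : ENNReal) ≤ ((∑ p ∈ s, if A p ≤ y ∧ y ≤ B p then 1 else 0 : ℕ) : ENNReal) := by
            exact_mod_cast this
          refine h2.trans (le_of_eq ?_)
          push_cast
          apply Finset.sum_congr rfl
          intro p _
          simp [Set.indicator_apply]
      _ ≤ ∫⁻ y, ∑ p ∈ s, (Set.Icc (A p) (B p)).indicator (fun _ => (1 : ENNReal)) y :=
          setLIntegral_le_lintegral _ _
      _ = ∑ p ∈ s, ENNReal.ofReal (max (B p - A p) 0) := by
          rw [lintegral_finsetSum _ (fun p _ => measurable_const.indicator measurableSet_Icc)]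
          apply Finset.sum_congr rfl
          intro p _
          rw [lintegral_indicator measurableSet_Icc]
          simp [ENNReal.ofReal_max]
      _ = _ := (ENNReal.ofReal_sum_of_nonneg (fun p _ => le_max_right _ _)).symm
  exact (ENNReal.ofReal_le_ofReal_iff (Finset.sum_nonneg (fun p _ => le_max_right _ _))).1 h1

/-- the optimal value of `k log μ` as a closed form -/
noncomputable def orcMu (k q : ℕ) : ℝ :=
  ((q : ℝ) ^ q / (((q - k : ℕ) : ℝ) ^ (q - k) * (k : ℝ) ^ k)) ^ ((1 : ℝ) / k)

lemma orcMu_pos {k q : ℕ} (hk : 1 ≤ k) (hkq : k < q) : 0 < orcMu k q := by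
  have : 0 < q - k := by omega
  have : 0 < q := by omega
  unfold orcMu
  positivity

lemma orcMu_log {k q : ℕ} (hk : 1 ≤ k) (hkq : k < q) :
    (k : ℝ) * Real.log (orcMu k q) =
      q * Real.log q - ((q : ℝ) - k) * Real.log ((q : ℝ) - k) - k * Real.log k := by
  have h1 : 0 < q - k := by omega
  have h2 : 0 < q := by omega
  have hk' : (0 : ℝ) < k := by exact_mod_cast hk
  have h3 : (0 : ℝ) < ((q - k : ℕ) : ℝ) := by exact_mod_cast h1
  have h4 : (0 : ℝ) < q := by exact_mod_cast h2
  unfold orcMu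
  rw [Real.log_rpow (by positivity), Real.log_div (by positivity) (by positivity),
    Real.log_mul (by positivity) (by positivity), Real.log_pow, Real.log_pow, Real.log_pow]
  rw [Nat.cast_sub hkq.le]
  field_simp
  ring

lemma orc_key {k q : ℕ} (hk : 1 ≤ k) (hkq : k < q) {z : ℝ} (hz : 0 < z) :
    (k : ℝ) * (Real.log (orcMu k q) + Real.log z) ≤ q * Real.log (1 + z) := by
  have hk' : (0 : ℝ) < k := by exact_mod_cast hk
  have hqk : (0 : ℝ) < (q : ℝ) - k := by
    have : (k : ℝ) < q := by exact_mod_cast hkq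
    linarith
  have hq : (0 : ℝ) < q := by linarith
  rw [mul_add, orcMu_log hk hkq]
  have u1 := Real.log_le_sub_one_of_pos (x := (q : ℝ) / (((q : ℝ) - k) * (1 + z))) (by positivity)
  have u2 := Real.log_le_sub_one_of_pos (x := (q : ℝ) * z / (k * (1 + z))) (by positivity)
  have e1 : Real.log ((q : ℝ) / (((q : ℝ) - k) * (1 + z))) =
      Real.log q - Real.log ((q : ℝ) - k) - Real.log (1 + z) := by
    rw [Real.log_div (by positivity) (by positivity), Real.log_mul (by positivity) (by positivity)]
    ring
  have e2 : Real.log ((q : ℝ) * z / (k * (1 + z))) =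
      Real.log q + Real.log z - Real.log k - Real.log (1 + z) := by
    rw [Real.log_div (by positivity) (by positivity), Real.log_mul (by positivity) (by positivity),
      Real.log_mul (by positivity) (by positivity)]
    ring
  have v1 := mul_le_mul_of_nonneg_left u1 hqk.le
  have v2 := mul_le_mul_of_nonneg_left u2 hk'.le
  have e3 : ((q : ℝ) - k) * ((q : ℝ) / (((q : ℝ) - k) * (1 + z)) - 1)
      + k * ((q : ℝ) * z / (k * (1 + z)) - 1) = 0 := by
    field_simp
    ring
  rw [e1] at v1
  rw [e2] at v2
  nlinarith

lemma orc_key_eps {k q : ℕ} (hk : 1 ≤ k) (hkq : k < q) {μ : ℝ} (hμ : 0 < μ)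
    (hlt : μ < orcMu k q) :
    ∃ ε : ℝ, 0 < ε ∧ ∀ z : ℝ, 0 < z →
      ((k : ℝ) + ε) * max (Real.log μ + Real.log z) 0 ≤ q * Real.log (1 + z) := by
  have hk' : (0 : ℝ) < k := by exact_mod_cast hk
  have hqk : (k : ℝ) + 1 ≤ q := by exact_mod_cast hkq
  set d := (k : ℝ) * (Real.log (orcMu k q) - Real.log μ) with hd
  have hdpos : 0 < d := mul_pos hk' (sub_pos.2 (Real.log_lt_log hμ hlt))
  set B := |((k : ℝ) + 1) * Real.log μ| with hB
  have hB0 : 0 ≤ B := abs_nonneg _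
  have hB1 : ((k : ℝ) + 1) * Real.log μ ≤ B := le_abs_self _
  refine ⟨d / (d + B + 1), by positivity, ?_⟩
  intro z hz
  have hl0 : 0 ≤ Real.log (1 + z) := Real.log_nonneg (by linarith)
  have hl1 : Real.log z ≤ Real.log (1 + z) := Real.log_le_log hz (by linarith)
  rcases le_total (Real.log μ + Real.log z) 0 with h | h
  · rw [max_eq_right h]; simp; positivity
  rw [max_eq_left h]
  set W := Real.log μ + Real.log z with hW
  have r1 : (k : ℝ) * W + d ≤ q * Real.log (1 + z) := by
    have := orc_key hk hkq hz
    rw [hW, hd]; linarith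
  have r2 : (k : ℝ) * W + (W - B) ≤ q * Real.log (1 + z) := by
    have a1 : ((k : ℝ) + 1) * Real.log z ≤ (k + 1) * Real.log (1 + z) :=
      mul_le_mul_of_nonneg_left hl1 (by positivity)
    have a2 : ((k : ℝ) + 1) * Real.log (1 + z) ≤ q * Real.log (1 + z) :=
      mul_le_mul_of_nonneg_right hqk hl0
    rw [hW]; linarith
  have hD : 0 < d + B + 1 := by positivity
  rw [add_mul]
  rcases le_total W (d + B + 1) with h' | h'
  · have : d / (d + B + 1) * W ≤ d := by
      rw [div_mul_eq_mul_div, div_le_iff₀ hD]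
      exact mul_le_mul_of_nonneg_left h' hdpos.le
    linarith
  · have : d / (d + B + 1) * W ≤ W - B := by
      rw [div_mul_eq_mul_div, div_le_iff₀ hD]
      nlinarith
    linarith

lemma orc_upper {k q : ℕ} (hk : 1 ≤ k) (hkq : k < q) :
    ∃ t : Fin k → ℕ → ℝ, (∀ r i, 1 ≤ t r i) ∧ ∀ x : ℝ, 1 ≤ x →
      q ≤ {p : Fin k × ℕ | x ≤ t p.1 p.2 ∧
        (∑ j ∈ Finset.range p.2, t p.1 j) ≤ orcMu k q * x}.ncard := by
  have hk' : (0 : ℝ) < k := by exact_mod_cast hk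
  have hqk : (0 : ℝ) < (q : ℝ) - k := by
    have : (k : ℝ) < q := by exact_mod_cast hkq
    linarith
  have hq : (0 : ℝ) < q := by linarith
  obtain ⟨α, hα⟩ : ∃ α : ℝ, α = ((q : ℝ) / (q - k)) ^ ((1 : ℝ) / k) := ⟨_, rfl⟩
  have hα1 : 1 < α := by
    rw [hα]
    apply Real.one_lt_rpow
    · rw [lt_div_iff₀ hqk]; linarith
    · positivity
  have hα0 : 0 < α := by linarith
  have hαk : α ^ k = (q : ℝ) / (q - k) := by
    rw [hα, ← Real.rpow_natCast, ← Real.rpow_mul (by positivity)]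
    rw [one_div_mul_cancel hk'.ne', Real.rpow_one]
  have hαk1 : α ^ k - 1 = (k : ℝ) / (q - k) := by
    rw [hαk]; field_simp; ring
  have hαk0 : 0 < α ^ k - 1 := by rw [hαk1]; positivity
  have hM := orcMu_pos hk hkq
  have hαq : α ^ q = orcMu k q * (α ^ k - 1) := by
    apply Real.log_injOn_pos (Set.mem_Ioi.2 (by positivity)) (Set.mem_Ioi.2 (by positivity))
    rw [Real.log_pow, Real.log_mul hM.ne' hαk0.ne', hαk1, hα, Real.log_rpow (by positivity),
      Real.log_div (by positivity) (by positivity), Real.log_div (by positivity) (by positivity)]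
    have := orcMu_log hk hkq
    have h2 : Real.log (orcMu k q) = (q * Real.log q - ((q : ℝ) - k) * Real.log ((q : ℝ) - k) - k * Real.log k) / k := by
      rw [← this]; field_simp
    rw [h2]
    field_simp
    ring
  refine ⟨fun r i => α ^ ((r : ℕ) + k * i), fun r i => one_le_pow₀ hα1.le, ?_⟩
  have hsum : ∀ r i : ℕ, (∑ j ∈ Finset.range i, α ^ (r + k * j)) * (α ^ k - 1) ≤ α ^ (r + k * i) := by
    intro r i
    have : (∑ j ∈ Finset.range i, α ^ (r + k * j)) * (α ^ k - 1) = α ^ (r + k * i) - α ^ r := by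
      induction i with
      | zero => simp
      | succ i ih =>
        rw [Finset.sum_range_succ, add_mul, ih, mul_add, ← add_assoc, pow_add α (r + k * i)]
        ring
    rw [this]
    have : 0 < α ^ r := by positivity
    linarith
  intro x hx
  obtain ⟨n, hn1, hn2⟩ := exists_nat_pow_near hx hα1
  have hfin : {p : Fin k × ℕ | x ≤ α ^ ((p.1 : ℕ) + k * p.2) ∧
        (∑ j ∈ Finset.range p.2, α ^ ((p.1 : ℕ) + k * j)) ≤ orcMu k q * x}.Finite := by
    apply ((Set.finite_univ (α := Fin k)).prod (Set.finite_Iic ⌊orcMu k q * x⌋₊)).subset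
    rintro ⟨r, i⟩ ⟨-, h⟩
    refine ⟨Set.mem_univ _, ?_⟩
    simp only [Set.mem_Iic]
    apply Nat.le_floor
    refine le_trans ?_ h
    have : ∑ j ∈ Finset.range i, (1 : ℝ) ≤ ∑ j ∈ Finset.range i, α ^ ((r : ℕ) + k * j) :=
      Finset.sum_le_sum (fun j _ => one_le_pow₀ hα1.le)
    simpa using this
  let f : ℕ → Fin k × ℕ := fun j => (⟨(n + 1 + j) % k, Nat.mod_lt _ (by omega)⟩, (n + 1 + j) / k)
  have hf : Function.Injective f := by
    intro a b hab
    simp only [f, Prod.mk.injEq, Fin.mk.injEq] at hab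
    have ha := Nat.mod_add_div (n + 1 + a) k
    have hb := Nat.mod_add_div (n + 1 + b) k
    rw [hab.1, hab.2] at ha
    omega
  calc q = (((Finset.range q).image f : Finset (Fin k × ℕ)) : Set (Fin k × ℕ)).ncard := by
        rw [Set.ncard_coe_finset, Finset.card_image_of_injective _ hf, Finset.card_range]
    _ ≤ _ := by
        apply Set.ncard_le_ncard _ hfin
        intro p hp
        simp only [Finset.coe_image, Set.mem_image, Finset.mem_coe, Finset.mem_range] at hp
        obtain ⟨j, hj, rfl⟩ := hp
        have e : (n + 1 + j) % k + k * ((n + 1 + j) / k) = n + 1 + j := Nat.mod_add_div _ _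
        simp only [Set.mem_setOf_eq, f]
        constructor
        · rw [e]
          exact hn2.le.trans (pow_le_pow_right₀ hα1.le (by omega))
        · have h1 := hsum ((n + 1 + j) % k) ((n + 1 + j) / k)
          rw [e] at h1
          refine le_of_mul_le_mul_right (h1.trans ?_) hαk0
          calc α ^ (n + 1 + j) ≤ α ^ (n + q) := pow_le_pow_right₀ hα1.le (by omega)
            _ = α ^ n * α ^ q := pow_add _ _ _
            _ ≤ x * α ^ q := by gcongr
            _ = _ := by rw [hαq]; ring

lemma orc_lower {k q : ℕ} (hk : 1 ≤ k) (hkq : k < q) {μ : ℝ} (hμ : 0 < μ)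
    {t : Fin k → ℕ → ℝ} (ht : ∀ r i, 1 ≤ t r i) (hc : ∀ x : ℝ, 1 ≤ x →
      q ≤ {p : Fin k × ℕ | x ≤ t p.1 p.2 ∧
        (∑ j ∈ Finset.range p.2, t p.1 j) ≤ μ * x}.ncard) : orcMu k q ≤ μ := by
  by_contra! hlt
  obtain ⟨c, hc0, hcμ⟩ : ∃ c : ℝ, 0 < c ∧ μ + c < orcMu k q :=
    ⟨(orcMu k q - μ) / 2, by linarith, by linarith⟩
  obtain ⟨ν, hν⟩ : ∃ ν, ν = μ + c := ⟨_, rfl⟩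
  rw [← hν] at hcμ
  have hν0 : 0 < ν := by linarith
  obtain ⟨ε, hε, hkey⟩ := orc_key_eps hk hkq hν0 hcμ
  have hk' : (0 : ℝ) < k := by exact_mod_cast hk
  have hq : (0 : ℝ) < q := by
    have : (k : ℝ) < q := by exact_mod_cast hkq
    linarith
  obtain ⟨K, hK⟩ : ∃ K, K = |Real.log (ν + 1) - Real.log c| := ⟨_, rfl⟩
  have hK0 : 0 ≤ K := hK ▸ abs_nonneg _
  have hK1 : Real.log (ν + 1) - Real.log c ≤ K := hK ▸ le_abs_self _
  obtain ⟨L, hL⟩ : ∃ L, L = (k * K + 1) / ε := ⟨_, rfl⟩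
  have hL0 : 0 ≤ L := by rw [hL]; positivity
  have hLε : ε * L = k * K + 1 := by rw [hL]; field_simp
  obtain ⟨N, hN⟩ : ∃ N, N = Real.exp L := ⟨_, rfl⟩
  have hN1 : 1 ≤ N := by rw [hN]; exact Real.one_le_exp hL0
  have hN0 : 0 < N := by linarith
  have hNlog : Real.log N = L := by rw [hN, Real.log_exp]
  let u : Fin k → ℕ → ℝ := fun r i => min (t r i) N
  have hu1 : ∀ r i, 1 ≤ u r i := fun r i => le_min (ht r i) hN1
  have hu0 : ∀ r i, 0 < u r i := fun r i => by linarith [hu1 r i]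
  let S : Fin k → ℕ → ℝ := fun r i => c + ∑ j ∈ Finset.range i, u r j
  have hSsucc : ∀ r i, S r (i + 1) = S r i + u r i := fun r i => by
    simp only [S, Finset.sum_range_succ]; ring
  have hS0 : ∀ r, S r 0 = c := fun r => by simp [S]
  have hSmono : ∀ r, Monotone (S r) := fun r =>
    monotone_nat_of_le_succ (fun i => by rw [hSsucc]; linarith [hu0 r i])
  have hSpos : ∀ r i, 0 < S r i := fun r i => by
    have := hSmono r (Nat.zero_le i)
    rw [hS0] at this; linarith
  have hSge : ∀ (r : Fin k) (i : ℕ), (i : ℝ) ≤ S r i := fun r i => by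
    induction i with
    | zero => simpa using (hSpos r 0).le
    | succ i ih => rw [hSsucc]; push_cast; linarith [hu1 r i]
  have hm : ∀ r, ∃ m : ℕ, S r m ≤ (ν + 1) * N ∧ ν * N < S r m := by
    intro r
    have hex : ∃ m, ν * N < S r m := by
      obtain ⟨m, hm⟩ := exists_nat_gt (ν * N)
      exact ⟨m, hm.trans_le (hSge r m)⟩
    classical
    refine ⟨Nat.find hex, ?_, Nat.find_spec hex⟩
    rcases h : Nat.find hex with _ | m
    · rw [hS0]
      have : c ≤ ν := by linarith
      nlinarith
    · have h2 : ¬ (ν * N < S r m) := Nat.find_min hex (by omega)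
      rw [hSsucc]
      have : u r m ≤ N := min_le_right _ _
      push Not at h2
      linarith
  choose m hm1 hm2 using hm
  let s : Finset (Σ _ : Fin k, ℕ) := Finset.univ.sigma (fun r => Finset.range (m r))
  have hmeas := orc_measure s (fun p => Real.log (S p.1 p.2) - Real.log ν)
    (fun p => Real.log (u p.1 p.2)) q L hL0 (by
      intro y hy
      have hx1 : 1 ≤ Real.exp y := Real.one_le_exp hy.1
      have hxN : Real.exp y ≤ N := by rw [hN]; exact Real.exp_le_exp.2 hy.2
      refine (hc (Real.exp y) hx1).trans ?_
      let g : (Σ _ : Fin k, ℕ) → Fin k × ℕ := fun p => (p.1, p.2)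
      rw [← Finset.card_image_of_injective (f := g) _ (by
        rintro ⟨a, b⟩ ⟨a', b'⟩ h; simpa [g] using h), ← Set.ncard_coe_finset]
      apply Set.ncard_le_ncard _ (Finset.finite_toSet _)
      rintro ⟨r, i⟩ ⟨h1, h2⟩
      dsimp only at h1 h2
      simp only [Finset.coe_image, Set.mem_image, Finset.mem_coe, Finset.mem_filter]
      have hSx : S r i ≤ ν * Real.exp y := by
        have : ∑ j ∈ Finset.range i, u r j ≤ ∑ j ∈ Finset.range i, t r j :=
          Finset.sum_le_sum (fun j _ => min_le_left _ _)
        simp only [S]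
        rw [hν]
        nlinarith
      refine ⟨⟨r, i⟩, ⟨?_, ?_, ?_⟩, rfl⟩
      · simp only [s, Finset.mem_sigma, Finset.mem_univ, true_and, Finset.mem_range]
        by_contra! hmi
        have h3 := hSmono r hmi
        have h4 := hm2 r
        have h5 : ν * Real.exp y ≤ ν * N := by gcongr
        linarith
      · have := Real.log_le_log (hSpos r i) hSx
        rw [Real.log_mul hν0.ne' (Real.exp_pos _).ne', Real.log_exp] at this
        dsimp only
        linarith
      · exact (Real.le_log_iff_exp_le (hu0 r i)).2 (le_min h1 hxN))
  have hterm : ∀ p ∈ s, ((k : ℝ) + ε) * max (Real.log (u p.1 p.2) - (Real.log (S p.1 p.2) - Real.log ν)) 0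
      ≤ q * (Real.log (S p.1 (p.2 + 1)) - Real.log (S p.1 p.2)) := by
    rintro ⟨r, i⟩ _
    dsimp only
    have h1 := hkey (u r i / S r i) (div_pos (hu0 r i) (hSpos r i))
    have h2 : 1 + u r i / S r i = S r (i + 1) / S r i := by
      rw [hSsucc]; have := (hSpos r i).ne'; field_simp
    rw [h2, Real.log_div (hSpos r _).ne' (hSpos r i).ne', Real.log_div (hu0 r _).ne' (hSpos r i).ne'] at h1
    convert h1 using 3
    ring
  have hsum := Finset.sum_le_sum hterm
  rw [← Finset.mul_sum, ← Finset.mul_sum] at hsum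
  have htel : ∑ r : Fin k, ∑ i ∈ Finset.range (m r),
      (Real.log (S r (i + 1)) - Real.log (S r i)) ≤ ∑ r : Fin k, (K + L) := by
    apply Finset.sum_le_sum
    intro r _
    rw [Finset.sum_range_sub (fun i => Real.log (S r i)), hS0]
    have := Real.log_le_log (hSpos r (m r)) (hm1 r)
    rw [Real.log_mul (by positivity) hN0.ne', hNlog] at this
    linarith
  rw [← Finset.sum_sigma Finset.univ (fun r => Finset.range (m r))
    (fun p : (Σ _ : Fin k, ℕ) => Real.log (S p.1 (p.2 + 1)) - Real.log (S p.1 p.2))] at htel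
  simp only [Finset.sum_const, Finset.card_univ, Fintype.card_fin, nsmul_eq_mul] at htel
  have f1 : ((k : ℝ) + ε) * (q * L) ≤ q * (k * (K + L)) :=
    (mul_le_mul_of_nonneg_left hmeas (by positivity)).trans
      (hsum.trans (mul_le_mul_of_nonneg_left htel hq.le))
  have f2 : ((k : ℝ) + ε) * L ≤ k * (K + L) := by
    refine le_of_mul_le_mul_left ?_ hq
    linarith
  linarith



/-- The optimal competitive ratio `C(k,q)` for `q`-fold covering of `[1,∞)` with
`k` robots in the one-ray-cover-with-returns setting equals
`2 (q^q/((q-k)^(q-k) k^k))^(1/k) + 1`. -/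
theorem orc_cover_competitive_ratio
    (k q : ℕ) (hk : 1 ≤ k) (hkq : k < q) :
    sInf {lam : ℝ | 1 < lam ∧
        ∃ t : Fin k → ℕ → ℝ,
          (∀ r i, 1 ≤ t r i) ∧
          ∀ x : ℝ, 1 ≤ x →
            q ≤ {p : Fin k × ℕ | x ≤ t p.1 p.2 ∧
                  (∑ j ∈ Finset.range p.2, t p.1 j) ≤ ((lam - 1) / 2) * x}.ncard}
      = 2 * ((q : ℝ) ^ q / (((q - k : ℕ) : ℝ) ^ (q - k) * (k : ℝ) ^ k)) ^ ((1 : ℝ) / k)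
          + 1 := by
  change _ = 2 * orcMu k q + 1
  have hM := orcMu_pos hk hkq
  apply IsLeast.csInf_eq
  constructor
  · refine ⟨by linarith, ?_⟩
    have e : (2 * orcMu k q + 1 - 1) / 2 = orcMu k q := by ring
    rw [e]
    exact orc_upper hk hkq
  · rintro lam ⟨h1, t, ht, hc⟩
    have := orc_lower hk hkq (μ := (lam - 1) / 2) (by linarith) ht hc
    linarith
end

section
/- Let η > 1 be a real number. Define C(η) as the infimum, over all n ∈ ℕ, all weight vectors w_1, …, w_n > 0 with w_1 + ⋯ + w_n = 1, and all ORC strategies t^{(1)}, …, t^{(n)}, of the set of λ > 1 such that for every x ≥ 1 one has Σ_{i=1}^n w_i · (number of rounds j with x ≤ t^{(i)}_j and ((λ-1)/2)·x ≥ t^{(i)}_1 + ⋯ + t^{(i)}_{j-1}) ≥ η. Then C(η) = 2·η^η/(η-1)^{η-1} + 1. -/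
lemma orc_key_s9 (p : ℝ) (hp : 1 < p) (r : ℝ) (hr : 1 < r) :
    p ^ p / (p - 1) ^ (p - 1) * (r - 1) ≤ r ^ p := by
  have hp0 : 0 < p := by linarith
  have hp1 : 0 < p - 1 := by linarith
  have hr1 : 0 < r - 1 := by linarith
  have h := Real.geom_mean_le_arith_mean2_weighted (w₁ := 1 / p) (w₂ := (p - 1) / p)
    (p₁ := p * (r - 1)) (p₂ := p / (p - 1)) (by positivity) (by positivity) (by positivity)
    (by positivity) (by field_simp; ring)
  have e : 1 / p * (p * (r - 1)) + (p - 1) / p * (p / (p - 1)) = r := by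
    field_simp; ring
  rw [e] at h
  have h2 := Real.rpow_le_rpow (by positivity) h hp0.le
  rw [Real.mul_rpow (by positivity) (by positivity), ← Real.rpow_mul (by positivity),
    ← Real.rpow_mul (by positivity)] at h2
  have e1 : 1 / p * p = 1 := by field_simp
  have e2 : (p - 1) / p * p = p - 1 := by field_simp
  rw [e1, e2, Real.rpow_one, Real.div_rpow hp0.le hp1.le] at h2
  refine le_trans (le_of_eq ?_) h2
  have e3 : p ^ p = p * p ^ (p - 1) := by
    rw [Real.rpow_sub_one hp0.ne']; field_simp
  rw [e3]; ring

/-- The set of log-positions covered in a round. -/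
def orcA (μ T S U : ℝ) : Set ℝ :=
  {u : ℝ | Real.exp u ≤ T ∧ S ≤ μ * Real.exp u} ∩ Set.Icc 0 U

lemma orcA_meas (μ T S U : ℝ) : MeasurableSet (orcA μ T S U) := by
  unfold orcA
  refine MeasurableSet.inter ?_ measurableSet_Icc
  have h1 : MeasurableSet {u : ℝ | Real.exp u ≤ T} :=
    measurableSet_le Real.measurable_exp measurable_const
  have h2 : MeasurableSet {u : ℝ | S ≤ μ * Real.exp u} :=
    measurableSet_le measurable_const (Real.measurable_exp.const_mul μ)
  exact h1.inter h2

lemma orcA_step (p μ T S U : ℝ) (hp : 1 < p) (hμ : 0 < μ) (hT : 1 ≤ T) (hS : 1 ≤ S)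
    (hkey : ∀ r : ℝ, 1 < r → μ * (r - 1) ≤ r ^ p) :
    MeasureTheory.volume.real (orcA μ T S U) ≤
      p * (Real.log (min (S + T) ((μ + 1) * Real.exp U)) -
        Real.log (min S ((μ + 1) * Real.exp U))) := by
  have hX := Real.exp_pos U
  have hmono : 0 ≤ p * (Real.log (min (S + T) ((μ + 1) * Real.exp U)) -
        Real.log (min S ((μ + 1) * Real.exp U))) := by
    apply mul_nonneg (by linarith)
    rw [sub_nonneg]
    apply Real.log_le_log
    · apply lt_min <;> positivity
    · exact min_le_min (by linarith) le_rfl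
  by_cases hc : S ≤ μ * Real.exp U
  · set T' := min T (Real.exp U) with hT'
    have hT'0 : 0 < T' := lt_min (by linarith) hX
    have hS0 : 0 < S := by linarith
    have hsub : orcA μ T S U ⊆ Set.Icc (Real.log (S / μ)) (Real.log T') := by
      rintro u ⟨⟨h1, h2⟩, h3, h4⟩
      constructor
      · rw [Real.log_le_iff_le_exp (by positivity), div_le_iff₀ hμ]; linarith
      · rw [Real.le_log_iff_exp_le hT'0]
        exact le_min h1 (Real.exp_le_exp.2 h4)
    have h1 : MeasureTheory.volume.real (orcA μ T S U) ≤
        max (Real.log T' - Real.log (S / μ)) 0 := by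
      refine (MeasureTheory.measureReal_mono hsub (by simp)).trans ?_
      rw [Real.volume_real_Icc]
    refine h1.trans (max_le ?_ hmono)
    have h2 := hkey ((S + T') / S) (by rw [lt_div_iff₀ hS0]; linarith)
    have h3 : μ * ((S + T') / S - 1) = T' / (S / μ) := by field_simp; ring
    rw [h3] at h2
    have h4 := Real.log_le_log (by positivity) h2
    rw [Real.log_rpow (by positivity), Real.log_div (x := T') (by positivity) (by positivity),
      Real.log_div (x := S + T') (by positivity) (by positivity)] at h4
    refine h4.trans ?_
    have h5 : min S ((μ + 1) * Real.exp U) = S := min_eq_left (by nlinarith)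
    rw [h5]
    have h6 : Real.log (S + T') ≤ Real.log (min (S + T) ((μ + 1) * Real.exp U)) := by
      apply Real.log_le_log (by positivity)
      apply le_min
      · linarith [min_le_left T (Real.exp U)]
      · linarith [min_le_right T (Real.exp U)]
    apply mul_le_mul_of_nonneg_left _ (by linarith)
    linarith
  · have : orcA μ T S U = ∅ := by
      ext u
      simp only [orcA, Set.mem_inter_iff, Set.mem_ofPred_eq, Set.mem_Icc, Set.mem_empty_iff_false,
        iff_false]
      rintro ⟨⟨_, h2⟩, _, h4⟩
      apply hc
      exact h2.trans (mul_le_mul_of_nonneg_left (Real.exp_le_exp.2 h4) hμ.le)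
    rw [this]; simpa using hmono

lemma orc_sum_ge (t : ℕ → ℝ) (ht : ∀ j, 1 ≤ t j) (N : ℕ) :
    (N : ℝ) ≤ ∑ l ∈ Finset.range N, t l := by
  have := Finset.card_nsmul_le_sum (Finset.range N) t 1 (fun j _ => ht j)
  simpa using this

lemma orc_robot (p μ U : ℝ) (t : ℕ → ℝ) (ht : ∀ j, 1 ≤ t j) (hp : 1 < p) (hμ : 0 < μ)
    (hU : 0 ≤ U) (hkey : ∀ r : ℝ, 1 < r → μ * (r - 1) ≤ r ^ p) (N : ℕ) :
    ∑ j ∈ Finset.range (N + 1),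
      MeasureTheory.volume.real (orcA μ (t j) (∑ l ∈ Finset.range j, t l) U) ≤
      Real.log (t 0) + p * (Real.log (μ + 1) + U) := by
  rw [Finset.sum_range_succ']
  have h0 : MeasureTheory.volume.real (orcA μ (t 0) (∑ l ∈ Finset.range 0, t l) U)
      ≤ Real.log (t 0) := by
    have hsub : orcA μ (t 0) (∑ l ∈ Finset.range 0, t l) U ⊆ Set.Icc 0 (Real.log (t 0)) := by
      rintro u ⟨⟨h1, h2⟩, h3, h4⟩
      refine ⟨h3, ?_⟩
      rwa [Real.le_log_iff_exp_le (by linarith [ht 0])]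
    refine (MeasureTheory.measureReal_mono hsub (by simp)).trans ?_
    rw [Real.volume_real_Icc]
    apply max_le <;> linarith [Real.log_nonneg (ht 0)]
  set Φ : ℕ → ℝ := fun j =>
    p * Real.log (min (∑ l ∈ Finset.range (j + 1), t l) ((μ + 1) * Real.exp U)) with hΦ
  have h1 : ∑ j ∈ Finset.range N,
      MeasureTheory.volume.real (orcA μ (t (j + 1)) (∑ l ∈ Finset.range (j + 1), t l) U) ≤
      ∑ j ∈ Finset.range N, (Φ (j + 1) - Φ j) := by
    apply Finset.sum_le_sum
    intro j _
    have hS : (1 : ℝ) ≤ ∑ l ∈ Finset.range (j + 1), t l := by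
      have := orc_sum_ge t ht (j + 1)
      push_cast at this
      have : (0 : ℝ) ≤ j := by positivity
      linarith
    have := orcA_step p μ (t (j + 1)) _ U hp hμ (ht _) hS hkey
    rw [mul_sub, ← Finset.sum_range_succ] at this
    exact this
  rw [Finset.sum_range_sub] at h1
  have hX : 1 ≤ Real.exp U := Real.one_le_exp hU
  have h2 : 0 ≤ Φ 0 := by
    apply mul_nonneg (by linarith)
    apply Real.log_nonneg
    apply le_min
    · simpa using ht 0
    · nlinarith
  have h3 : Φ N ≤ p * (Real.log (μ + 1) + U) := by
    apply mul_le_mul_of_nonneg_left _ (by linarith)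
    have : Real.log (μ + 1) + U = Real.log ((μ + 1) * Real.exp U) := by
      rw [Real.log_mul (by positivity) (by positivity), Real.log_exp]
    rw [this]
    apply Real.log_le_log _ (min_le_right _ _)
    apply lt_min _ (by positivity)
    have := orc_sum_ge t ht (N + 1)
    push_cast at this
    have : (0 : ℝ) ≤ N := by positivity
    linarith
  linarith

lemma orc_avg (η p μ U : ℝ) (n : ℕ) (w : Fin n → ℝ) (t : Fin n → ℕ → ℝ)
    (hw : ∀ i, 0 < w i) (hw1 : (∑ i, w i) = 1) (ht : ∀ i j, 1 ≤ t i j) (hp : 1 < p) (hμ : 0 < μ)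
    (hU : 0 ≤ U) (hkey : ∀ r : ℝ, 1 < r → μ * (r - 1) ≤ r ^ p)
    (hcov : ∀ x : ℝ, 1 ≤ x → η ≤ ∑ i, w i * ({j : ℕ | x ≤ t i j ∧
                  (∑ l ∈ Finset.range j, t i l) ≤ μ * x}.ncard : ℝ)) :
    η * U ≤ (∑ i, w i * Real.log (t i 0)) + p * (Real.log (μ + 1) + U) := by
  classical
  obtain ⟨N, hN⟩ := exists_nat_gt (μ * Real.exp U)
  set A : Fin n → ℕ → Set ℝ := fun i j => orcA μ (t i j) (∑ l ∈ Finset.range j, t i l) U with hA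
  have hpt : ∀ u ∈ Set.Icc 0 U, η ≤ ∑ i, w i * ∑ j ∈ Finset.range (N + 1),
      (A i j).indicator (fun _ => (1 : ℝ)) u := by
    intro u hu
    refine (hcov (Real.exp u) (Real.one_le_exp hu.1)).trans (le_of_eq ?_)
    apply Finset.sum_congr rfl
    intro i _
    congr 1
    simp only [Set.indicator_apply, Finset.sum_boole]
    have : {j : ℕ | Real.exp u ≤ t i j ∧ (∑ l ∈ Finset.range j, t i l) ≤ μ * Real.exp u} =
        ((Finset.range (N + 1)).filter (fun j => u ∈ A i j) : Finset ℕ) := by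
      ext j
      simp only [hA, orcA, Set.mem_ofPred_eq, Finset.coe_filter, Finset.mem_range, Set.mem_inter_iff]
      constructor
      · rintro ⟨h1, h2⟩
        refine ⟨?_, ⟨h1, h2⟩, hu⟩
        have h3 := orc_sum_ge (t i) (ht i) j
        have h4 : μ * Real.exp u ≤ μ * Real.exp U :=
          mul_le_mul_of_nonneg_left (Real.exp_le_exp.2 hu.2) hμ.le
        have : (j : ℝ) < N := by linarith
        have : j < N := by exact_mod_cast this
        omega
      · rintro ⟨_, h, _⟩; exact h
    rw [this, Set.ncard_coe_finset]
  have hint : ∀ i j, MeasureTheory.IntegrableOn ((A i j).indicator (fun _ => (1 : ℝ)))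
      (Set.Icc 0 U) := by
    intro i j
    apply MeasureTheory.Integrable.indicator _ (orcA_meas _ _ _ _)
    simp
  have hI := MeasureTheory.setIntegral_mono_on (μ := MeasureTheory.volume)
    (f := fun _ => η) (s := Set.Icc 0 U) (by simp)
    (MeasureTheory.integrable_finsetSum _ (fun i _ =>
      (MeasureTheory.integrable_finsetSum _ (fun j _ => hint i j)).const_mul (w i)))
    measurableSet_Icc hpt
  rw [MeasureTheory.setIntegral_const, Real.volume_real_Icc_of_le hU,
    MeasureTheory.integral_finsetSum _ (fun i _ =>
      (MeasureTheory.integrable_finsetSum _ (fun j _ => hint i j)).const_mul (w i))] at hI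
  have hI2 : ∀ i, ∫ u in Set.Icc 0 U, w i * ∑ j ∈ Finset.range (N + 1),
      (A i j).indicator (fun _ => (1 : ℝ)) u ≤
      w i * (Real.log (t i 0) + p * (Real.log (μ + 1) + U)) := by
    intro i
    rw [MeasureTheory.integral_const_mul, MeasureTheory.integral_finsetSum _ (fun j _ => hint i j)]
    apply mul_le_mul_of_nonneg_left _ (hw i).le
    refine le_trans (le_of_eq ?_) (orc_robot p μ U (t i) (ht i) hp hμ hU hkey N)
    apply Finset.sum_congr rfl
    intro j _
    rw [MeasureTheory.setIntegral_indicator (orcA_meas _ _ _ _), MeasureTheory.setIntegral_const]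
    have : Set.Icc 0 U ∩ A i j = A i j := Set.inter_eq_right.2 Set.inter_subset_right
    rw [this]; simp [hA]
  have h3 := hI.trans (Finset.sum_le_sum (fun i _ => hI2 i))
  simp only [mul_add (w _) _ _, Finset.sum_add_distrib, ← Finset.sum_mul, hw1] at h3
  simp only [smul_eq_mul] at h3
  linarith

lemma orc_lower_s9 (η μ : ℝ) (hη : 1 < η) (n : ℕ) (w : Fin n → ℝ) (t : Fin n → ℕ → ℝ)
    (hw : ∀ i, 0 < w i) (hw1 : (∑ i, w i) = 1) (ht : ∀ i j, 1 ≤ t i j) (hμ : 0 < μ)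
    (hcov : ∀ x : ℝ, 1 ≤ x → η ≤ ∑ i, w i * ({j : ℕ | x ≤ t i j ∧
                  (∑ l ∈ Finset.range j, t i l) ≤ μ * x}.ncard : ℝ)) :
    η ^ η / (η - 1) ^ (η - 1) ≤ μ := by
  by_contra hlt
  push Not at hlt
  have hcont : ContinuousAt (fun p : ℝ => p ^ p / (p - 1) ^ (p - 1)) η := by
    apply ContinuousAt.div
    · exact continuousAt_id.rpow continuousAt_id (Or.inl (by simp; linarith))
    · exact ContinuousAt.rpow (by fun_prop) (by fun_prop) (Or.inl (by linarith))
    · exact (Real.rpow_pos_of_pos (by linarith) _).ne'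
  have hev := (hcont.eventually (lt_mem_nhds hlt)).filter_mono
    (nhdsWithin_le_nhds (s := Set.Iio η))
  have hev2 : ∀ᶠ p in nhdsWithin η (Set.Iio η), 1 < p :=
    (lt_mem_nhds hη).filter_mono nhdsWithin_le_nhds
  obtain ⟨p, ⟨hp1, hp2⟩, hp3⟩ := ((hev.and hev2).and self_mem_nhdsWithin).exists
  replace hp3 : p < η := hp3
  have hkey : ∀ r : ℝ, 1 < r → μ * (r - 1) ≤ r ^ p := fun r hr =>
    (mul_le_mul_of_nonneg_right hp1.le (by linarith)).trans (orc_key_s9 p hp2 r hr)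
  set C := (∑ i, w i * Real.log (t i 0)) + p * Real.log (μ + 1) with hC
  have hd : 0 < η - p := by linarith
  have h := orc_avg η p μ ((|C| + 1) / (η - p)) n w t hw hw1 ht hp2 hμ (by positivity) hkey hcov
  have h2 : (η - p) * ((|C| + 1) / (η - p)) = |C| + 1 := by field_simp
  have := le_abs_self C
  nlinarith

lemma orc_upper_s9 (η μ : ℝ) (hη : 1 < η) (hμ : η ^ η / (η - 1) ^ (η - 1) < μ) :
    ∃ (n : ℕ) (w : Fin n → ℝ) (t : Fin n → ℕ → ℝ),
          (∀ i, 0 < w i) ∧ (∑ i, w i) = 1 ∧ (∀ i j, 1 ≤ t i j) ∧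
          ∀ x : ℝ, 1 ≤ x →
            η ≤ ∑ i, w i * ({j : ℕ | x ≤ t i j ∧
                  (∑ l ∈ Finset.range j, t i l) ≤ μ * x}.ncard : ℝ) := by
  classical
  have hη1 : 0 < η - 1 := by linarith
  have hη0 : 0 < η := by linarith
  set b := η / (η - 1) with hb
  have hb1 : 1 < b := by rw [hb, lt_div_iff₀ hη1]; linarith
  have hb0 : 0 < b := by linarith
  have hbm : b - 1 = 1 / (η - 1) := by rw [hb]; field_simp; ring
  have hbm0 : 0 < b - 1 := by linarith
  have hμ0 : 0 < μ := lt_trans (by positivity) hμ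
  have hg : b ^ η < μ * (b - 1) := by
    have : b ^ η = η ^ η / (η - 1) ^ (η - 1) * (b - 1) := by
      rw [hbm, hb, Real.div_rpow hη0.le hη1.le, Real.rpow_sub_one hη1.ne']
      field_simp
    rw [this]
    exact mul_lt_mul_of_pos_right hμ hbm0
  set e := Real.logb b (μ * (b - 1)) with he
  have hbe : b ^ e = μ * (b - 1) := Real.rpow_logb hb0 hb1.ne' (by positivity)
  have hηe : η < e := by rw [← hbe] at hg; exact (Real.rpow_lt_rpow_left_iff hb1).1 hg
  obtain ⟨n, hn⟩ := exists_nat_gt (1 / (e - η))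
  have hde : 0 < e - η := by linarith
  have hn0 : (0 : ℝ) < n := lt_trans (by positivity) hn
  have hn0' : 0 < n := by exact_mod_cast hn0
  rw [div_lt_iff₀ hde] at hn
  set τ : ℕ → ℝ := fun m => b ^ ((m : ℝ) / n) with hτ
  have hτ1 : ∀ m, 1 ≤ τ m := fun m => Real.one_le_rpow hb1.le (by positivity)
  have hτs : ∀ i j, τ (n * (j + 1) + i) = b * τ (n * j + i) := by
    intro i j
    simp only [hτ]
    rw [mul_comm b, ← Real.rpow_add_one hb0.ne']
    congr 1
    push_cast
    field_simp
    ring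
  have hsum : ∀ i j, (b - 1) * (∑ l ∈ Finset.range j, τ (n * l + i)) ≤ τ (n * j + i) := by
    intro i j
    induction j with
    | zero => simp; linarith [hτ1 i]
    | succ j ih => rw [Finset.sum_range_succ, hτs]; linarith
  refine ⟨n, fun _ => 1 / n, fun i j => τ (n * j + i), fun _ => by positivity, ?_,
    fun i j => hτ1 _, ?_⟩
  · simp; field_simp
  intro x hx
  have hx0 : 0 < x := by linarith
  set L := Real.logb b x with hL
  have hbL : b ^ L = x := Real.rpow_logb hb0 hb1.ne' hx0
  have hL0 : 0 ≤ L := Real.logb_nonneg hb1 hx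
  set M := Finset.Icc ⌈n * L⌉₊ ⌊n * (L + e)⌋₊ with hM
  have hMcard : n * η ≤ (M.card : ℝ) := by
    have h1 := Nat.ceil_lt_add_one (show 0 ≤ n * L by positivity)
    have h2 := Nat.lt_floor_add_one (n * (L + e))
    have h3 : ⌊n * (L + e)⌋₊ + 1 ≤ M.card + ⌈n * L⌉₊ := by
      rw [hM, Nat.card_Icc]; omega
    have h3' : (⌊n * (L + e)⌋₊ : ℝ) + 1 ≤ M.card + ⌈n * L⌉₊ := by exact_mod_cast h3
    nlinarith
  have hMc : ∀ m ∈ M, x ≤ τ m ∧ τ m ≤ μ * (b - 1) * x := by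
    intro m hm
    rw [hM, Finset.mem_Icc] at hm
    have h1 := Nat.ceil_le.1 hm.1
    have h2 := (Nat.le_floor_iff (mul_nonneg hn0.le (by linarith))).1 hm.2
    constructor
    · rw [← hbL]
      apply Real.rpow_le_rpow_of_exponent_le hb1.le
      rw [le_div_iff₀ hn0]; linarith
    · rw [← hbe, ← hbL, ← Real.rpow_add hb0]
      apply Real.rpow_le_rpow_of_exponent_le hb1.le
      rw [div_le_iff₀ hn0]; linarith
  have hfib : M.card = ∑ i : Fin n, (M.filter (fun m => (⟨m % n, Nat.mod_lt _ hn0'⟩ : Fin n) = i)).card :=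
    Finset.card_eq_sum_card_fiberwise (fun _ _ => Finset.mem_coe.2 (Finset.mem_univ _))
  have hcount : ∀ i : Fin n, (M.filter (fun m => (⟨m % n, Nat.mod_lt _ hn0'⟩ : Fin n) = i)).card ≤
      {j : ℕ | x ≤ τ (n * j + i) ∧ (∑ l ∈ Finset.range j, τ (n * l + i)) ≤ μ * x}.ncard := by
    intro i
    have hfin : {j : ℕ | x ≤ τ (n * j + i) ∧
        (∑ l ∈ Finset.range j, τ (n * l + i)) ≤ μ * x}.Finite := by
      apply Set.Finite.subset (Set.finite_Iic ⌊μ * x⌋₊)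
      rintro j ⟨_, h⟩
      rw [Set.mem_Iic, Nat.le_floor_iff (by positivity)]
      exact (orc_sum_ge (fun l => τ (n * l + i)) (fun _ => hτ1 _) j).trans h
    rw [← Set.ncard_coe_finset]
    apply Set.ncard_le_ncard_of_injOn (fun m => m / n) _ _ hfin
    · intro m hm
      simp only [Finset.coe_filter, Set.mem_ofPred_eq] at hm
      obtain ⟨hm, hi⟩ := hm
      have hi' : m % n = i := by rw [← hi]
      have hmi : n * (m / n) + i = m := by rw [← hi']; exact Nat.div_add_mod m n
      obtain ⟨h1, h2⟩ := hMc m hm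
      have h3 := hsum i (m / n)
      simp only [Set.mem_ofPred_eq]
      rw [hmi] at h3 ⊢
      refine ⟨h1, ?_⟩
      refine le_of_mul_le_mul_left (h3.trans (h2.trans (le_of_eq ?_))) hbm0
      ring
    · intro m hm m' hm' hmm
      simp only [Finset.coe_filter, Set.mem_ofPred_eq] at hm hm'
      have h1 : m % n = m' % n := by
        have := hm.2.trans hm'.2.symm
        simpa using this
      rw [← Nat.div_add_mod m n, ← Nat.div_add_mod m' n, h1]
      simp only at hmm
      rw [hmm]
  rw [← Finset.mul_sum]
  have h5 : (M.card : ℝ) ≤ ∑ i : Fin n, ({j : ℕ | x ≤ τ (n * j + i) ∧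
      (∑ l ∈ Finset.range j, τ (n * l + i)) ≤ μ * x}.ncard : ℝ) := by
    rw [hfib]; push_cast
    exact Finset.sum_le_sum (fun i _ => by exact_mod_cast hcount i)
  rw [one_div, ← div_eq_inv_mul, le_div_iff₀ hn0]
  linarith

/-- The optimal competitive ratio `C(η)` for fractional one-ray retrieval with
returns equals `2 η^η/(η-1)^(η-1) + 1`.  Finitely many robots with positive
weights summing to `1` move on the ray; a point `x ≥ 1` is `λ`-covered by a
robot in round `j` iff `x ≤ t j` and the sum of the previous turning points is
at most `((λ-1)/2)·x`; feasibility requires, for every `x ≥ 1`, total covering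
weight (counted with round multiplicity) at least `η`. -/
theorem fractional_orc_competitive_ratio (η : ℝ) (hη : 1 < η) :
    sInf {lam : ℝ | 1 < lam ∧
        ∃ (n : ℕ) (w : Fin n → ℝ) (t : Fin n → ℕ → ℝ),
          (∀ i, 0 < w i) ∧ (∑ i, w i) = 1 ∧ (∀ i j, 1 ≤ t i j) ∧
          ∀ x : ℝ, 1 ≤ x →
            η ≤ ∑ i, w i * ({j : ℕ | x ≤ t i j ∧
                  (∑ l ∈ Finset.range j, t i l) ≤ ((lam - 1) / 2) * x}.ncard : ℝ)}
      = 2 * η ^ η / (η - 1) ^ (η - 1) + 1 := by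
  have hg0 : 0 < η ^ η / (η - 1) ^ (η - 1) :=
    div_pos (Real.rpow_pos_of_pos (by linarith) _) (Real.rpow_pos_of_pos (by linarith) _)
  rw [mul_div_assoc]
  have hup : ∀ v, 2 * (η ^ η / (η - 1) ^ (η - 1)) + 1 < v → ∃ a ∈ {lam : ℝ | 1 < lam ∧
        ∃ (n : ℕ) (w : Fin n → ℝ) (t : Fin n → ℕ → ℝ),
          (∀ i, 0 < w i) ∧ (∑ i, w i) = 1 ∧ (∀ i j, 1 ≤ t i j) ∧
          ∀ x : ℝ, 1 ≤ x →
            η ≤ ∑ i, w i * ({j : ℕ | x ≤ t i j ∧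
                  (∑ l ∈ Finset.range j, t i l) ≤ ((lam - 1) / 2) * x}.ncard : ℝ)}, a < v := by
    intro v hv
    obtain ⟨a, ha1, ha2⟩ := exists_between hv
    exact ⟨a, ⟨by linarith, orc_upper_s9 η ((a - 1) / 2) hη (by linarith)⟩, ha2⟩
  apply csInf_eq_of_forall_ge_of_forall_gt_exists_lt
  · obtain ⟨a, ha, _⟩ := hup _ (lt_add_one _)
    exact ⟨a, ha⟩
  · rintro a ⟨ha, n, w, t, hw, hw1, ht, hcov⟩
    have := orc_lower_s9 η ((a - 1) / 2) hη n w t hw hw1 ht (by linarith) hcov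
    linarith
  · exact hup
end
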